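/- arXiv:math/0605104 — 4 statements merged into one kernel-verified Lean document; each statement's English description precedes it below -/
import Mathlib

section
/- For every n ≥ 1, the number of reduced semilinear n-quasigroups of order 4 equals 3·2^(2^n − n − 1) − 2. -/
/-- The alphabet `Σ = {0,1,2,3}`. -/
abbrev V4 := Fin 4

/-- An `n`-quasigroup of order 4: for every point, index and value there is
exactly one way to complete along the line. -/
def IsNQuasigroup {n : ℕ} (f : (Fin n → V4) → V4) : Prop :=
  ∀ (a : Fin n → V4) (i : Fin n) (b : V4),
    ∃! x : V4, f (Function.update a i x) = b

/-- A reduced `n`-quasigroup: `f(0,…,0,a,0,…,0) = a`. -/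
def IsReducedQ {n : ℕ} (f : (Fin n → V4) → V4) : Prop :=
  ∀ (i : Fin n) (a : V4), f (Function.update (fun _ => 0) i a) = a

/-- `S_{a,b}(f)`. -/
def SCode {n : ℕ} (f : (Fin n → V4) → V4) (a b : V4) : Set (Fin n → V4) :=
  {x | f x = a ∨ f x = b}

/-- A linear double-code: `χ_S(x₁,…,xₙ) = χ_{S₁}(x₁) ⊕ ⋯ ⊕ χ_{Sₙ}(xₙ)`
for some two-element subsets `Sᵢ ⊆ Σ`. -/
def IsLinearDoubleCode {n : ℕ} (S : Set (Fin n → V4)) : Prop :=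
  ∃ T : Fin n → Finset V4, (∀ i, (T i).card = 2) ∧
    ∀ x : Fin n → V4, x ∈ S ↔ (∑ i, if x i ∈ T i then (1 : ZMod 2) else 0) = 1

/-- A semilinear `n`-quasigroup: `S_{a,b}(f)` is a linear double-code
for some `a ≠ b`. -/
def IsSemilinear {n : ℕ} (f : (Fin n → V4) → V4) : Prop :=
  ∃ a b : V4, a ≠ b ∧ IsLinearDoubleCode (SCode f a b)

/-!
Identify `Σ` with `𝔽₂²` through binary digits. A reduced `f` with a linear double-code `S_{a,b}(f)`
satisfies `χ (f x) = ∑ χ (xᵢ)` for one of the three nonzero linear functionals `χ` on `𝔽₂²`, namely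
the one with `χ a = χ b`. For a fixed `χ` with an independent functional `ψ`, the quasigroup
property forces `ψ (f x) = ∑ ψ (xᵢ) + l (χ x₁, …, χ xₙ)` for a Boolean function `l`, which is
arbitrary except that, `f` being reduced, it vanishes on the `n + 1` vectors of weight at most one.
This gives `2 ^ (2 ^ n - n - 1)` quasigroups for each `χ`, and any two of the three families share
only the digitwise sum `∑ xᵢ`.
-/

section General

theorem ncard_iUnion_of_pairwise_inter_subset_singleton {ι α : Type*} [Fintype ι] [Nonempty ι]
    {A : ι → Set α} {a : α} (hfin : ∀ i, (A i).Finite) (ha : ∀ i, a ∈ A i)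
    (hA : Pairwise fun i j => A i ∩ A j ⊆ {a}) :
    (⋃ i, A i).ncard = ∑ i, ((A i).ncard - 1) + 1 := by
  have petals_disjoint : Pairwise fun i j => Disjoint (A i \ {a}) (A j \ {a}) := fun i j hij =>
    Set.disjoint_left.2 fun x hi hj => hi.2 (hA hij ⟨hi.1, hj.1⟩)
  have mem_union : a ∈ ⋃ i, A i := Set.mem_iUnion.2 ⟨Classical.arbitrary ι, ha _⟩
  rw [← Set.ncard_sdiff_singleton_add_one mem_union (Set.finite_iUnion hfin), Set.iUnion_sdiff,
    Set.ncard_iUnion_of_finite (fun i => (hfin i).sdiff) petals_disjoint,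
    finsum_eq_sum_of_fintype]
  simp only [Set.ncard_sdiff_singleton_of_mem (ha _)]

theorem ncard_setOf_eqOn {α β : Type*} [Finite α] (g : α → β) (s : Set α) :
    {l : α → β | Set.EqOn l g s}.ncard = Nat.card β ^ (Nat.card α - s.ncard) := by
  classical
  have eqOn_iff (l : α → β) : Set.EqOn l g s ↔ l ∘ ((↑) : s → α) = g ∘ (↑) :=
    Set.domRestrict_eq_domRestrict_iff.symm
  calc {l : α → β | Set.EqOn l g s}.ncard
      = Nat.card {l : α → β // l ∘ ((↑) : s → α) = g ∘ (↑)} :=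
        Nat.card_congr (Equiv.subtypeEquivRight eqOn_iff)
    _ = Nat.card (↥sᶜ → β) := Nat.card_congr (Equiv.subtypePreimage (· ∈ s) _)
    _ = Nat.card β ^ (Nat.card α - s.ncard) := by
        rw [Nat.card_fun, Nat.card_coe_set_eq, Set.ncard_compl]

theorem sum_update_sub_sum {ι M : Type*} [Fintype ι] [DecidableEq ι] [AddCommGroup M]
    {α : ι → Type*} (φ : ∀ i, α i → M) (x : ∀ i, α i) (i : ι) (v : α i) :
    ∑ j, φ j (Function.update x i v j) - ∑ j, φ j (x j) = φ i v - φ i (x i) := by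
  simp only [Function.apply_update φ]
  rw [Finset.sum_update_of_mem (Finset.mem_univ i),
    Finset.sum_eq_add_sum_sdiff_singleton_of_mem (Finset.mem_univ i) fun j => φ j (x j)]
  abel

theorem apply_eq_of_forall_apply_update_eq {ι β : Type*} [Finite ι] [DecidableEq ι]
    {α : ι → Type*} {r : ∀ i, α i → α i → Prop} {g : (∀ i, α i) → β}
    (hg : ∀ x i v, r i v (x i) → g (Function.update x i v) = g x)
    {x y : ∀ i, α i} (hxy : ∀ i, r i (y i) (x i)) : g y = g x := by
  have piecewise_eq (s : Finset ι) : g (s.piecewise y x) = g x := by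
    induction s using Finset.induction_on with
    | empty => simp
    | insert j s hj ih =>
      rw [Finset.piecewise_insert, hg, ih]
      rw [Finset.piecewise_eq_of_notMem _ _ _ hj]
      exact hxy j
  cases nonempty_fintype ι
  simpa using piecewise_eq Finset.univ

theorem ite_eq_one_zmod_two : ∀ t : ZMod 2, (if t = 1 then 1 else 0) = t := by decide

/-- The union of the coordinate axes of `ι → M`, that is, the vectors of weight at most one
(for `ι` nonempty). -/
def coordinateAxes (ι M : Type*) [DecidableEq ι] [Zero M] : Set (ι → M) :=
  ⋃ i, Set.range (Pi.single i)

theorem eqOn_coordinateAxes_iff {ι M β : Type*} [DecidableEq ι] [Zero M] {l m : (ι → M) → β} :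
    Set.EqOn l m (coordinateAxes ι M) ↔ ∀ i t, l (Pi.single i t) = m (Pi.single i t) := by
  refine ⟨fun h i t => h (Set.mem_iUnion.2 ⟨i, t, rfl⟩), fun h y hy => ?_⟩
  obtain ⟨i, t, rfl⟩ := Set.mem_iUnion.1 hy
  exact h i t

theorem ncard_coordinateAxes (ι M : Type*) [Fintype ι] [DecidableEq ι] [Nonempty ι] [Finite M]
    [Zero M] :
    (coordinateAxes ι M).ncard = Fintype.card ι * (Nat.card M - 1) + 1 := by
  have zero_mem (i : ι) : (0 : ι → M) ∈ Set.range (Pi.single i) := ⟨0, Pi.single_zero i⟩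
  have axes_inter : Pairwise fun i j : ι =>
      Set.range (Pi.single (M := fun _ => M) i) ∩ Set.range (Pi.single j) ⊆ {0} := by
    rintro i j hij _ ⟨⟨s, rfl⟩, t, hst⟩
    have hs : s = 0 := by simpa [hij] using (congrFun hst i).symm
    rw [hs, Pi.single_zero, Set.mem_singleton_iff]
  rw [coordinateAxes, ncard_iUnion_of_pairwise_inter_subset_singleton
    (fun _ => Set.toFinite _) zero_mem axes_inter]
  simp [Set.ncard_range_of_injective (Pi.single_injective _)]

end General

section BitFunctional

/-- The three nonzero linear functionals on `Σ = 𝔽₂²`, a letter being identified with its pair of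
binary digits: the high digit, the low digit and their sum. -/
def bitFunctional : Fin 3 → V4 → ZMod 2 :=
  ![![0, 0, 1, 1], ![0, 1, 0, 1], ![0, 1, 1, 0]]

theorem bitFunctional_zero : ∀ c, bitFunctional c 0 = 0 := by decide

theorem bitFunctional_two : bitFunctional 2 = bitFunctional 0 + bitFunctional 1 := by decide

theorem eq_of_bitFunctional_eq : ∀ {c d : Fin 3}, c ≠ d → ∀ {u v : V4},
    bitFunctional c u = bitFunctional c v → bitFunctional d u = bitFunctional d v → u = v := by
  decide

theorem bitFunctional_succ_sub_eq_one : ∀ {c : Fin 3} {u v : V4}, u ≠ v →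
    bitFunctional c u = bitFunctional c v →
      bitFunctional (c + 1) u - bitFunctional (c + 1) v = 1 := by
  decide

theorem card_filter_bitFunctional_eq_one :
    ∀ c, (Finset.univ.filter fun v => bitFunctional c v = 1).card = 2 := by
  decide

theorem exists_pair_iff_bitFunctional_eq_one :
    ∀ c, ∃ a b : V4, a ≠ b ∧ ∀ v, (v = a ∨ v = b) ↔ bitFunctional c v = 1 := by
  decide

theorem exists_bitFunctional_eq_indicator_sub : ∀ {a b : V4}, a ≠ b → ∃ c, ∀ v,
    bitFunctional c v =
      (if v = a ∨ v = b then 1 else 0) - (if 0 = a ∨ 0 = b then 1 else 0) := by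
  decide

/-- The coordinates on `Σ = 𝔽₂²` given by two independent functionals, the index `c + 1` being
read cyclically. -/
noncomputable def bitCoords (c : Fin 3) : V4 ≃ ZMod 2 × ZMod 2 :=
  Equiv.ofBijective (fun v => (bitFunctional c v, bitFunctional (c + 1) v)) (by revert c; decide)

theorem bitFunctional_bitCoords_symm (c : Fin 3) (w : ZMod 2 × ZMod 2) :
    bitFunctional c ((bitCoords c).symm w) = w.1 :=
  congrArg Prod.fst ((bitCoords c).apply_symm_apply w)

theorem bitFunctional_succ_bitCoords_symm (c : Fin 3) (w : ZMod 2 × ZMod 2) :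
    bitFunctional (c + 1) ((bitCoords c).symm w) = w.2 :=
  congrArg Prod.snd ((bitCoords c).apply_symm_apply w)

theorem bitFunctional_surjective (c : Fin 3) : Function.Surjective (bitFunctional c) :=
  fun t => ⟨_, bitFunctional_bitCoords_symm c (t, 0)⟩

end BitFunctional

section Quasigroup

variable {n : ℕ} {f g : (Fin n → V4) → V4} {c d : Fin 3} {l : (Fin n → ZMod 2) → ZMod 2}

theorem isNQuasigroup_of_injective_update
    (hf : ∀ x i, Function.Injective fun v => f (Function.update x i v)) : IsNQuasigroup f :=
  fun x i => (Finite.injective_iff_bijective.1 (hf x i)).existsUnique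

theorem IsNQuasigroup.apply_update_ne (hf : IsNQuasigroup f) {x : Fin n → V4} {i : Fin n} {v : V4}
    (hv : v ≠ x i) : f (Function.update x i v) ≠ f x := fun h =>
  hv ((hf x i (f x)).unique h (by rw [Function.update_eq_self]))

theorem IsReducedQ.map_zero [NeZero n] (hf : IsReducedQ f) : f (fun _ => 0) = 0 :=
  (congrArg f (Function.update_eq_self 0 _)).symm.trans (hf 0 0)

section IsAdditiveAlong

/-- `f` becomes addition after applying `χ` to its arguments and its value. -/
def IsAdditiveAlong {M : Type*} [AddCommMonoid M] (χ : V4 → M) (f : (Fin n → V4) → V4) : Prop :=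
  ∀ x, χ (f x) = ∑ i, χ (x i)

theorem IsAdditiveAlong.add {M : Type*} [AddCommMonoid M] {χ ψ : V4 → M}
    (hχ : IsAdditiveAlong χ f) (hψ : IsAdditiveAlong ψ f) : IsAdditiveAlong (χ + ψ) f := fun x => by
  simp only [Pi.add_apply, hχ x, hψ x, Finset.sum_add_distrib]

theorem IsReducedQ.isAdditiveAlong_of_eq_sum [NeZero n] {M : Type*} [AddCommGroup M]
    (hf : IsReducedQ f) {φ : V4 → M} {ψ : Fin n → V4 → M} (hφ : ∀ x, φ (f x) = ∑ i, ψ i (x i)) :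
    IsAdditiveAlong (fun v => φ v - φ 0) f := by
  have sub_eq (i : Fin n) (v : V4) : φ v - φ 0 = ψ i v - ψ i 0 := by
    rw [← sum_update_sub_sum ψ (fun _ => 0) i v, ← hφ, ← hφ, hf, hf.map_zero]
  intro x
  calc φ (f x) - φ 0 = ∑ i, ψ i (x i) - ∑ i, ψ i 0 := by rw [← hφ, ← hφ fun _ => 0, hf.map_zero]
    _ = ∑ i, (φ (x i) - φ 0) := by
        rw [← Finset.sum_sub_distrib]
        exact Finset.sum_congr rfl fun i _ => (sub_eq i (x i)).symm

theorem IsSemilinear.exists_isAdditiveAlong [NeZero n] (hf : IsSemilinear f) (hr : IsReducedQ f) :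
    ∃ c, IsAdditiveAlong (bitFunctional c) f := by
  obtain ⟨a, b, hab, T, -, hT⟩ := hf
  have indicator_eq_sum (x : Fin n → V4) : (if f x = a ∨ f x = b then (1 : ZMod 2) else 0) =
      ∑ i, if x i ∈ T i then 1 else 0 := by
    rw [← ite_eq_one_zmod_two (∑ i, _)]
    exact if_congr (hT x) rfl rfl
  obtain ⟨c, hc⟩ := exists_bitFunctional_eq_indicator_sub hab
  refine ⟨c, ?_⟩
  rw [funext hc]
  exact hr.isAdditiveAlong_of_eq_sum (φ := fun v => if v = a ∨ v = b then 1 else 0)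
    (ψ := fun i v => if v ∈ T i then 1 else 0) indicator_eq_sum

theorem IsAdditiveAlong.isSemilinear (hf : IsAdditiveAlong (bitFunctional c) f) :
    IsSemilinear f := by
  obtain ⟨a, b, hab, pair_iff⟩ := exists_pair_iff_bitFunctional_eq_one c
  refine ⟨a, b, hab, fun _ => Finset.univ.filter fun v => bitFunctional c v = 1,
    fun _ => card_filter_bitFunctional_eq_one c, fun x => ?_⟩
  simp only [Finset.mem_filter_univ, ite_eq_one_zmod_two, ← hf x]
  exact pair_iff (f x)

theorem IsAdditiveAlong.eq_of_ne (hcd : c ≠ d) (hfc : IsAdditiveAlong (bitFunctional c) f)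
    (hfd : IsAdditiveAlong (bitFunctional d) f) (hgc : IsAdditiveAlong (bitFunctional c) g)
    (hgd : IsAdditiveAlong (bitFunctional d) g) : f = g :=
  funext fun x =>
    eq_of_bitFunctional_eq hcd ((hfc x).trans (hgc x).symm) ((hfd x).trans (hgd x).symm)

end IsAdditiveAlong

section TwistedSum

/-- The operation that adds the arguments in the coordinates `bitCoords c`, the second coordinate
of the result being shifted by a Boolean function `l` of the first coordinates of the arguments. -/
noncomputable def twistedSum (c : Fin 3) (l : (Fin n → ZMod 2) → ZMod 2) (x : Fin n → V4) : V4 :=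
  (bitCoords c).symm (∑ i, bitFunctional c (x i),
    ∑ i, bitFunctional (c + 1) (x i) + l fun i => bitFunctional c (x i))

theorem isAdditiveAlong_twistedSum (c : Fin 3) (l : (Fin n → ZMod 2) → ZMod 2) :
    IsAdditiveAlong (bitFunctional c) (twistedSum c l) := fun _ =>
  bitFunctional_bitCoords_symm c _

theorem bitFunctional_succ_twistedSum (c : Fin 3) (l : (Fin n → ZMod 2) → ZMod 2)
    (x : Fin n → V4) : bitFunctional (c + 1) (twistedSum c l x) =
      ∑ i, bitFunctional (c + 1) (x i) + l fun i => bitFunctional c (x i) :=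
  bitFunctional_succ_bitCoords_symm c _

theorem isAdditiveAlong_twistedSum_zero (c : Fin 3) :
    IsAdditiveAlong (bitFunctional c) (twistedSum (n := n) 0 0) := by
  have along_zero := isAdditiveAlong_twistedSum (n := n) 0 0
  have along_one : IsAdditiveAlong (bitFunctional 1) (twistedSum (n := n) 0 0) := fun x => by
    simpa using bitFunctional_succ_twistedSum 0 0 x
  match c with
  | 0 => exact along_zero
  | 1 => exact along_one
  | 2 => exact bitFunctional_two ▸ along_zero.add along_one

theorem twistedSum_injective (c : Fin 3) : Function.Injective (twistedSum (n := n) c) := by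
  intro l m hlm
  funext y
  obtain ⟨x, rfl⟩ := (bitFunctional_surjective c).comp_left y
  have hx := congrArg (bitFunctional (c + 1)) (congrFun hlm x)
  rw [bitFunctional_succ_twistedSum, bitFunctional_succ_twistedSum] at hx
  exact add_left_cancel hx

theorem bitFunctional_comp_update (c : Fin 3) (x : Fin n → V4) (i : Fin n) (v : V4) :
    (fun j => bitFunctional c (Function.update x i v j)) =
      Function.update (fun j => bitFunctional c (x j)) i (bitFunctional c v) :=
  Function.comp_update (bitFunctional c) x i v

theorem isNQuasigroup_twistedSum (c : Fin 3) (l : (Fin n → ZMod 2) → ZMod 2) :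
    IsNQuasigroup (twistedSum c l) := by
  refine isNQuasigroup_of_injective_update fun x i u v huv => ?_
  have sum_update_eq {d : Fin 3} (h : ∑ j, bitFunctional d (Function.update x i u j) =
      ∑ j, bitFunctional d (Function.update x i v j)) : bitFunctional d u = bitFunctional d v := by
    have hu := sum_update_sub_sum (fun _ => bitFunctional d) x i u
    rw [h, sum_update_sub_sum (fun _ => bitFunctional d)] at hu
    exact (sub_left_injective hu).symm
  have first_eq : bitFunctional c u = bitFunctional c v := sum_update_eq <| by
    simpa only [isAdditiveAlong_twistedSum c l _] using congrArg (bitFunctional c) huv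
  have second_eq : bitFunctional (c + 1) u = bitFunctional (c + 1) v := sum_update_eq <| by
    simpa only [bitFunctional_succ_twistedSum, bitFunctional_comp_update, first_eq,
      add_left_inj] using congrArg (bitFunctional (c + 1)) huv
  exact eq_of_bitFunctional_eq (by simp) first_eq second_eq

theorem IsNQuasigroup.exists_twistedSum_eq (hf : IsNQuasigroup f)
    (hadd : IsAdditiveAlong (bitFunctional c) f) : ∃ l, twistedSum c l = f := by
  let defect (x : Fin n → V4) : ZMod 2 :=
    bitFunctional (c + 1) (f x) - ∑ i, bitFunctional (c + 1) (x i)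
  have defect_update (x : Fin n → V4) (i : Fin n) (v : V4)
      (hv : bitFunctional c v = bitFunctional c (x i)) :
      defect (Function.update x i v) = defect x := by
    obtain rfl | hne := eq_or_ne v (x i)
    · rw [Function.update_eq_self]
    have first_eq : bitFunctional c (f (Function.update x i v)) = bitFunctional c (f x) := by
      rw [hadd, hadd, ← sub_eq_zero, sum_update_sub_sum fun _ => bitFunctional c, hv, sub_self]
    -- Both the value and the changed argument move within a fibre of the first coordinate,
    -- so the second coordinate of each flips.
    have value_flips := bitFunctional_succ_sub_eq_one (hf.apply_update_ne hne) first_eq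
    have sum_flips := (sum_update_sub_sum (fun _ => bitFunctional (c + 1)) x i v).trans
      (bitFunctional_succ_sub_eq_one hne hv)
    linear_combination value_flips - sum_flips
  have defect_factors : defect.FactorsThrough fun x i => bitFunctional c (x i) := fun x y hxy =>
    apply_eq_of_forall_apply_update_eq
      (r := fun _ u v => bitFunctional c u = bitFunctional c v) defect_update (congrFun hxy)
  obtain ⟨l, hl⟩ := (Function.factorsThrough_iff defect).1 defect_factors
  refine ⟨l, funext fun x => eq_of_bitFunctional_eq (c := c) (d := c + 1) (by simp) ?_ ?_⟩
  · rw [isAdditiveAlong_twistedSum c l x, hadd x]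
  · rw [bitFunctional_succ_twistedSum]
    have defect_eq : defect x = l fun i => bitFunctional c (x i) := congrFun hl x
    linear_combination -defect_eq

theorem isReducedQ_twistedSum_iff :
    IsReducedQ (twistedSum c l) ↔ Set.EqOn l 0 (coordinateAxes (Fin n) (ZMod 2)) := by
  have sum_axis (d : Fin 3) (i : Fin n) (a : V4) :
      ∑ j, bitFunctional d (Function.update (fun _ => (0 : V4)) i a j) = bitFunctional d a := by
    simpa [bitFunctional_zero] using sum_update_sub_sum (fun _ => bitFunctional d) (fun _ => 0) i a
  have second_axis (i : Fin n) (a : V4) :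
      bitFunctional (c + 1) (twistedSum c l (Function.update (fun _ => 0) i a)) =
        bitFunctional (c + 1) a + l (Pi.single i (bitFunctional c a)) := by
    rw [bitFunctional_succ_twistedSum, sum_axis, bitFunctional_comp_update]
    simp only [bitFunctional_zero]
    rfl
  have axis_iff (i : Fin n) (a : V4) : twistedSum c l (Function.update (fun _ => 0) i a) = a ↔
      l (Pi.single i (bitFunctional c a)) = 0 := by
    rw [← add_eq_left (a := bitFunctional (c + 1) a), ← second_axis]
    refine ⟨congrArg _, eq_of_bitFunctional_eq (c := c) (by simp) ?_⟩
    rw [isAdditiveAlong_twistedSum c l _, sum_axis]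
  simp only [IsReducedQ, axis_iff, eqOn_coordinateAxes_iff, (bitFunctional_surjective c).forall,
    Pi.zero_apply]

end TwistedSum

section Counting

/-- The reduced `n`-quasigroups that are additive along the functional `bitFunctional c`. -/
def reducedAdditive (n : ℕ) (c : Fin 3) : Set ((Fin n → V4) → V4) :=
  {f | IsNQuasigroup f ∧ IsAdditiveAlong (bitFunctional c) f ∧ IsReducedQ f}

theorem setOf_reduced_semilinear_eq_iUnion (n : ℕ) [NeZero n] :
    {f : (Fin n → V4) → V4 | IsNQuasigroup f ∧ IsSemilinear f ∧ IsReducedQ f} =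
      ⋃ c, reducedAdditive n c := by
  ext f
  rw [Set.mem_iUnion]
  constructor
  · rintro ⟨hq, hs, hr⟩
    obtain ⟨c, hc⟩ := hs.exists_isAdditiveAlong hr
    exact ⟨c, hq, hc, hr⟩
  · rintro ⟨c, hq, hc, hr⟩
    exact ⟨hq, hc.isSemilinear, hr⟩

theorem reducedAdditive_eq_image (n : ℕ) (c : Fin 3) : reducedAdditive n c =
    twistedSum c '' {l | Set.EqOn l 0 (coordinateAxes (Fin n) (ZMod 2))} := by
  ext f
  constructor
  · rintro ⟨hq, hc, hr⟩
    obtain ⟨l, rfl⟩ := hq.exists_twistedSum_eq hc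
    exact ⟨l, isReducedQ_twistedSum_iff.1 hr, rfl⟩
  · rintro ⟨l, hl, rfl⟩
    exact ⟨isNQuasigroup_twistedSum c l, isAdditiveAlong_twistedSum c l,
      isReducedQ_twistedSum_iff.2 hl⟩

theorem ncard_reducedAdditive (n : ℕ) [NeZero n] (c : Fin 3) :
    (reducedAdditive n c).ncard = 2 ^ (2 ^ n - n - 1) := by
  rw [reducedAdditive_eq_image, Set.ncard_image_of_injective _ (twistedSum_injective c),
    ncard_setOf_eqOn, ncard_coordinateAxes]
  simp [Nat.sub_sub]

theorem twistedSum_zero_mem_reducedAdditive (n : ℕ) (c : Fin 3) :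
    twistedSum 0 0 ∈ reducedAdditive n c :=
  ⟨isNQuasigroup_twistedSum 0 0, isAdditiveAlong_twistedSum_zero c,
    isReducedQ_twistedSum_iff.2 (Set.eqOn_refl 0 _)⟩

theorem reducedAdditive_inter_subset (n : ℕ) (hcd : c ≠ d) :
    reducedAdditive n c ∩ reducedAdditive n d ⊆ {twistedSum 0 0} := fun _ hf =>
  IsAdditiveAlong.eq_of_ne hcd hf.1.2.1 hf.2.2.1 (isAdditiveAlong_twistedSum_zero c)
    (isAdditiveAlong_twistedSum_zero d)

end Counting

end Quasigroup

/-- The number of reduced semilinear `n`-quasigroups of order 4 equals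
`3·2^(2^n − n − 1) − 2`. -/
theorem card_reduced_semilinear (n : ℕ) (hn : 1 ≤ n) :
    Nat.card {f : (Fin n → V4) → V4 //
        IsNQuasigroup f ∧ IsSemilinear f ∧ IsReducedQ f} =
      3 * 2 ^ (2 ^ n - n - 1) - 2 := by
  have : NeZero n := ⟨Nat.one_le_iff_ne_zero.1 hn⟩
  have pow_pos : 0 < 2 ^ (2 ^ n - n - 1) := by positivity
  calc Nat.card {f : (Fin n → V4) → V4 // IsNQuasigroup f ∧ IsSemilinear f ∧ IsReducedQ f}
      = (⋃ c, reducedAdditive n c).ncard :=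
        congrArg Set.ncard (setOf_reduced_semilinear_eq_iUnion n)
    _ = ∑ c, ((reducedAdditive n c).ncard - 1) + 1 :=
        ncard_iUnion_of_pairwise_inter_subset_singleton (fun _ => Set.toFinite _)
          (twistedSum_zero_mem_reducedAdditive n) fun _ _ => reducedAdditive_inter_subset n
    _ = 3 * (2 ^ (2 ^ n - n - 1) - 1) + 1 := by simp [ncard_reducedAdditive]
    _ = 3 * 2 ^ (2 ^ n - n - 1) - 2 := by omega
end

section
/- For every n ≥ 1, the number of semilinear n-quasigroups of order 4 equals 3^(n+1)·2^(2^n + 1) − 8·6^n. -/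
/-! Identify `Σ` with `𝔽₂²`. Up to complement, its two-element subsets are the supports of the three
nonzero linear forms `ℓ₀, ℓ₁, ℓ₂`, so `f` is semilinear exactly when some `ℓₖ ∘ f` is a sum of such
forms in the separate variables plus a constant; call `f` affine along `k` in this case.

Let `ℓₖ(f x) = ∑ ℓ_{α i}(x i) + c`, let `k' ≠ k` and choose `β i ≠ α i`. Then `f` is a quasigroup
exactly when `ℓₖ'(f x) - ∑ ℓ_{β i}(x i)` depends only on the bits `ℓ_{α i}(x i)`. As `ℓₖ` and `ℓₖ'`
together determine `f`, the choices of `α`, of `c` and of a function of `n` bits give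
`3 ^ n * 2 * 2 ^ 2 ^ n` quasigroups affine along `k`. Since `ℓ₀ + ℓ₁ + ℓ₂ = 0`, a quasigroup affine
along two indices is affine along the third; such a quasigroup is given by `n` ordered pairs
`α i ≠ β i` and two constants, so there are `6 ^ n * 4` of them. Inclusion-exclusion over `k`
concludes. -/

open Finset Function

section General

theorem sum_apply_update_add {ι M : Type*} {X : ι → Type*} [Fintype ι] [DecidableEq ι]
    [AddCommMonoid M] (g : ∀ i, X i → M) (a : ∀ i, X i) (i : ι) (v : X i) :
    ∑ j, g j (update a i v j) + g i (a i) = ∑ j, g j (a j) + g i v := by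
  simp only [apply_update, sum_update_of_mem (mem_univ i)]
  rw [← sum_sdiff (subset_univ {i}), sum_singleton]
  abel

theorem factorsThrough_piMap_of_forall_update_eq {ι Z : Type*} {X Y : ι → Type*} [Finite ι]
    [DecidableEq ι] {p : ∀ i, X i → Y i} {g : (∀ i, X i) → Z}
    (hg : ∀ x i v, p i v = p i (x i) → g (update x i v) = g x) :
    g.FactorsThrough (Pi.map p) := by
  intro y x hyx
  have := Fintype.ofFinite ι
  have hpiecewise (s : Finset ι) : g (s.piecewise y x) = g x := by
    induction s using Finset.induction_on with
    | empty => rw [piecewise_empty]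
    | insert i s hi ih =>
      rw [piecewise_insert, hg _ _ _ (by simpa [hi] using congrFun hyx i), ih]
  simpa using hpiecewise univ

theorem ite_one_zero_eq_iff {P : Prop} [Decidable P] {s : ZMod 2} :
    (if P then 1 else 0) = s ↔ (P ↔ s = 1) := by
  have hs : 0 = s ↔ s ≠ 1 := by revert s; decide
  split_ifs with hP <;> simp [hP, hs, eq_comm]

theorem ncard_iUnion_add_of_pairwise_inter_eq {ι X : Type*} [Fintype ι] [Nontrivial ι]
    {s : ι → Set X} {t : Set X} (hs : ∀ i, (s i).Finite) (h : Pairwise fun i j ↦ s i ∩ s j = t) :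
    (⋃ i, s i).ncard + Fintype.card ι * t.ncard = ∑ i, (s i).ncard + t.ncard := by
  have hsub (i : ι) : t ⊆ s i := by
    obtain ⟨j, hj⟩ := exists_ne i
    exact h hj.symm ▸ Set.inter_subset_left
  have hdisjoint : Pairwise (Disjoint on fun i ↦ s i \ t) := fun i j hij ↦
    Set.disjoint_left.2 fun x hi hj ↦ hi.2 (h hij ▸ ⟨hi.1, hj.1⟩)
  have hunion : (⋃ i, s i) \ t = ⋃ i, s i \ t := Set.iUnion_sdiff t s
  have hpetals : ((⋃ i, s i) \ t).ncard = ∑ i, (s i \ t).ncard := by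
    rw [hunion, Set.ncard_iUnion_of_finite (fun i ↦ (hs i).sdiff) hdisjoint,
      finsum_eq_sum_of_fintype]
  have hcore : t ⊆ ⋃ i, s i := (hsub (Classical.arbitrary ι)).trans (Set.subset_iUnion s _)
  calc (⋃ i, s i).ncard + Fintype.card ι * t.ncard
      = ∑ i, ((s i \ t).ncard + t.ncard) + t.ncard := by
        rw [← Set.ncard_sdiff_add_ncard_of_subset hcore (Set.finite_iUnion hs), hpetals,
          sum_add_distrib, sum_const, card_univ, smul_eq_mul]
        ring
    _ = ∑ i, (s i).ncard + t.ncard := by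
        simp only [Set.ncard_sdiff_add_ncard_of_subset (hsub _) (hs _)]

end General

/-- The three nonzero linear forms `ℓ₀, ℓ₁, ℓ₂` on `Σ`, where `x ∈ Σ` is identified with the vector
`(ℓ₀ x, ℓ₁ x)` of its binary digits. Every two-element subset of `Σ` is the support of exactly one
of them or the complement of such a support. -/
def linForm : Fin 3 → V4 → ZMod 2 :=
  ![![0, 1, 0, 1], ![0, 0, 1, 1], ![0, 1, 1, 0]]

theorem linForm_zero (k : Fin 3) : linForm k 0 = 0 := by
  revert k; decide

theorem linForm_surjective (k : Fin 3) : Surjective (linForm k) := by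
  unfold Surjective; revert k; decide

theorem linForm_injective : Injective linForm := by decide

theorem linForm_neg_add {k k' : Fin 3} (h : k ≠ k') (y : V4) :
    linForm (-(k + k')) y = linForm k y + linForm k' y := by
  revert k k' y; decide

theorem exists_ne_linForm_eq (k : Fin 3) : ∃ x y, x ≠ y ∧ linForm k x = linForm k y := by
  revert k; decide

theorem exists_indicator_eq_linForm_add {T : Finset V4} (hT : #T = 2) :
    ∃ k c, ∀ y, (if y ∈ T then (1 : ZMod 2) else 0) = linForm k y + c := by
  revert T; decide

theorem exists_linForm_add_eq_indicator (k : Fin 3) (c : ZMod 2) :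
    ∃ T : Finset V4, #T = 2 ∧ ∀ y, (if y ∈ T then (1 : ZMod 2) else 0) = linForm k y + c := by
  revert k c; decide

/-- The coordinates `(ℓₖ x, ℓₖ' x)` on `Σ`, by which a function to `Σ` can be prescribed through
two arbitrary Boolean components. -/
noncomputable def linFormPair {k k' : Fin 3} (h : k ≠ k') : V4 ≃ ZMod 2 × ZMod 2 :=
  Equiv.ofBijective (fun x ↦ (linForm k x, linForm k' x)) (by revert k k'; decide)

theorem eq_of_linForm_eq {k k' : Fin 3} (h : k ≠ k') {x y : V4} (hk : linForm k x = linForm k y)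
    (hk' : linForm k' x = linForm k' y) : x = y :=
  (linFormPair h).injective (Prod.ext hk hk')

theorem isNQuasigroup_iff_injective {n : ℕ} {f : (Fin n → V4) → V4} :
    IsNQuasigroup f ↔ ∀ a i, Injective fun v ↦ f (update a i v) := by
  simp only [IsNQuasigroup, Finite.injective_iff_bijective, bijective_iff_existsUnique]

section LinForms

variable {ι : Type*}

/-- The vector of bits `ℓ_{α i}(x i)`, which records the coordinates of `x` up to the fibres of the
forms `ℓ_{α i}`. -/
def linForms (α : ι → Fin 3) : (ι → V4) → ι → ZMod 2 :=
  Pi.map fun i ↦ linForm (α i)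

theorem linForms_surjective (α : ι → Fin 3) : Surjective (linForms α) :=
  .piMap fun i ↦ linForm_surjective (α i)

variable [Fintype ι]

/-- The linear form `∑ i, ℓ_{α i}(x i)` on `Σ^ι`. -/
def linFormSum (α : ι → Fin 3) (x : ι → V4) : ZMod 2 :=
  ∑ i, linForm (α i) (x i)

theorem linFormSum_update_add [DecidableEq ι] (α : ι → Fin 3) (a : ι → V4) (i : ι)
    (v : V4) :
    linFormSum α (update a i v) + linForm (α i) (a i) = linFormSum α a + linForm (α i) v :=
  sum_apply_update_add (fun j ↦ linForm (α j)) a i v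

theorem linFormSum_update_eq_update_iff [DecidableEq ι] {α : ι → Fin 3} {a : ι → V4}
    {i : ι} {v w : V4} :
    linFormSum α (update a i v) = linFormSum α (update a i w) ↔
      linForm (α i) v = linForm (α i) w := by
  rw [← add_left_inj (linForm (α i) (a i)), linFormSum_update_add, linFormSum_update_add,
    add_right_inj]

theorem linFormSum_update_eq_self_iff [DecidableEq ι] {α : ι → Fin 3} {a : ι → V4}
    {i : ι} {v : V4} :
    linFormSum α (update a i v) = linFormSum α a ↔ linForm (α i) v = linForm (α i) (a i) := by
  rw [← linFormSum_update_eq_update_iff (a := a), update_eq_self]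

theorem eq_and_eq_of_linFormSum_add_eq {α β : ι → Fin 3} {c d : ZMod 2}
    (hsum : ∀ x, linFormSum α x + c = linFormSum β x + d) : α = β ∧ c = d := by
  classical
  have hzero (γ : ι → Fin 3) : linFormSum γ 0 = 0 := by simp [linFormSum, linForm_zero]
  have hcd : c = d := by simpa only [hzero, zero_add] using hsum 0
  have hαβ (i : ι) : α i = β i := linForm_injective <| funext fun v ↦ by
    have hupdate (γ : ι → Fin 3) : linFormSum γ (update 0 i v) = linForm (γ i) v := by
      simpa [hzero, linForm_zero] using linFormSum_update_add γ 0 i v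
    simpa only [hupdate, hcd, add_left_inj] using hsum (update 0 i v)
  exact ⟨funext hαβ, hcd⟩

end LinForms

section Affine

variable {n : ℕ} {f : (Fin n → V4) → V4} {k k' : Fin 3} {α β : Fin n → Fin 3} {c d : ZMod 2}

/-- `f` is affine along `k` if `ℓₖ ∘ f` is a sum of linear forms in the separate variables plus a
constant, that is, if the support of `ℓₖ ∘ f` is a linear double-code up to complement. -/
def IsAffineAlong (k : Fin 3) (f : (Fin n → V4) → V4) : Prop :=
  ∃ α c, ∀ x, linForm k (f x) = linFormSum α x + c

theorem isLinearDoubleCode_sCode_iff {a b : V4} :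
    IsLinearDoubleCode (SCode f a b) ↔ ∃ T : Fin n → Finset V4, (∀ i, #(T i) = 2) ∧ ∀ x,
      (if f x ∈ ({a, b} : Finset V4) then (1 : ZMod 2) else 0) =
        ∑ i, if x i ∈ T i then (1 : ZMod 2) else 0 := by
  simp only [IsLinearDoubleCode, SCode, Set.mem_ofPred_eq, ite_one_zero_eq_iff, mem_insert,
    mem_singleton]

theorem isSemilinear_iff_exists_isAffineAlong : IsSemilinear f ↔ ∃ k, IsAffineAlong k f := by
  simp only [IsSemilinear, isLinearDoubleCode_sCode_iff]
  constructor
  · rintro ⟨a, b, hab, T, hT, hcode⟩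
    obtain ⟨k, e, hk⟩ := exists_indicator_eq_linForm_add (card_pair hab)
    choose α ε hα using fun i ↦ exists_indicator_eq_linForm_add (hT i)
    refine ⟨k, α, ∑ i, ε i - e, fun x ↦ ?_⟩
    rw [← add_sub_assoc, eq_sub_iff_add_eq, ← hk, hcode, linFormSum, ← sum_add_distrib]
    simp only [hα]
  · rintro ⟨k, α, c, h⟩
    obtain ⟨P, hP, hk⟩ := exists_linForm_add_eq_indicator k c
    obtain ⟨a, b, hab, rfl⟩ := card_eq_two.1 hP
    choose T hT hα using fun i ↦ exists_linForm_add_eq_indicator (α i) 0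
    refine ⟨a, b, hab, T, hT, fun x ↦ ?_⟩
    simp only [hk, hα, h, add_zero, add_assoc, CharTwo.add_self_eq_zero, linFormSum]

namespace IsNQuasigroup

theorem linForm_index_ne (hf : IsNQuasigroup f) (hk : k ≠ k')
    (hα : ∀ x, linForm k (f x) = linFormSum α x + c)
    (hβ : ∀ x, linForm k' (f x) = linFormSum β x + d) (i : Fin n) : α i ≠ β i := by
  intro hi
  obtain ⟨v, w, hvw, hform⟩ := exists_ne_linForm_eq (α i)
  refine hvw (isNQuasigroup_iff_injective.1 hf 0 i (eq_of_linForm_eq hk ?_ ?_))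
  · rw [hα, hα, linFormSum_update_eq_update_iff.2 hform]
  · rw [hβ, hβ, linFormSum_update_eq_update_iff.2 (hi ▸ hform)]

theorem isAffineAlong_of_ne (hf : IsNQuasigroup f) (hk : k ≠ k') (h : IsAffineAlong k f)
    (h' : IsAffineAlong k' f) (l : Fin 3) : IsAffineAlong l f := by
  have hl : l = k ∨ l = k' ∨ l = -(k + k') := by
    clear h h'; revert k k' l; decide
  obtain rfl | rfl | rfl := hl
  · exact h
  · exact h'
  obtain ⟨α, c, hα⟩ := h
  obtain ⟨β, d, hβ⟩ := h'
  refine ⟨fun i ↦ -(α i + β i), c + d, fun x ↦ ?_⟩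
  simp only [linFormSum, linForm_neg_add (hf.linForm_index_ne hk hα hβ _), linForm_neg_add hk,
    sum_add_distrib, hα, hβ]
  abel

-- Both terms change when `x i` moves within a fibre of `ℓ_{α i}`, and `𝔽₂` has only two elements.
theorem linForm_add_linFormSum_update (hf : IsNQuasigroup f) (hk : k ≠ k')
    (hα : ∀ x, linForm k (f x) = linFormSum α x + c) (hαβ : ∀ i, α i ≠ β i) (x : Fin n → V4)
    (i : Fin n) (v : V4) (hv : linForm (α i) v = linForm (α i) (x i)) :
    linForm k' (f (update x i v)) + linFormSum β (update x i v) =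
      linForm k' (f x) + linFormSum β x := by
  obtain rfl | hne := eq_or_ne v (x i)
  · rw [update_eq_self]
  have hf_ne : f (update x i v) ≠ f x := fun h ↦
    hne (isNQuasigroup_iff_injective.1 hf x i (by simpa only [update_eq_self] using h))
  have hform : linForm k (f (update x i v)) = linForm k (f x) := by
    rw [hα, hα, linFormSum_update_eq_self_iff.2 hv]
  have hform_ne : linForm k' (f (update x i v)) ≠ linForm k' (f x) :=
    fun h ↦ hf_ne (eq_of_linForm_eq hk hform h)
  have hsum_ne : linFormSum β (update x i v) ≠ linFormSum β x := fun h ↦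
    hne (eq_of_linForm_eq (hαβ i) hv (linFormSum_update_eq_self_iff.1 h))
  have htwo : ∀ {p q r s : ZMod 2}, p ≠ q → r ≠ s → p + r = q + s := by decide
  exact htwo hform_ne hsum_ne

end IsNQuasigroup

/-- The function `f` on `Σⁿ` with `ℓₖ(f x) = ∑ ℓ_{α i}(x i) + c` and
`ℓₖ'(f x) = ∑ ℓ_{β i}(x i) + h((ℓ_{α i}(x i))ᵢ)`, the general form of a quasigroup affine along `k`
once `β i ≠ α i` is fixed. -/
noncomputable def ofLinForms (hk : k ≠ k') (α β : Fin n → Fin 3) (c : ZMod 2)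
    (h : (Fin n → ZMod 2) → ZMod 2) (x : Fin n → V4) : V4 :=
  (linFormPair hk).symm (linFormSum α x + c, linFormSum β x + h (linForms α x))

section OfLinForms

variable (hk : k ≠ k') {h : (Fin n → ZMod 2) → ZMod 2}

theorem linForm_fst_ofLinForms (x : Fin n → V4) :
    linForm k (ofLinForms hk α β c h x) = linFormSum α x + c :=
  congrArg Prod.fst ((linFormPair hk).apply_symm_apply _)

theorem linForm_snd_ofLinForms (x : Fin n → V4) :
    linForm k' (ofLinForms hk α β c h x) = linFormSum β x + h (linForms α x) :=
  congrArg Prod.snd ((linFormPair hk).apply_symm_apply _)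

theorem eq_ofLinForms_iff :
    f = ofLinForms hk α β c h ↔ (∀ x, linForm k (f x) = linFormSum α x + c) ∧
      ∀ x, linForm k' (f x) = linFormSum β x + h (linForms α x) := by
  refine ⟨?_, fun ⟨hfst, hsnd⟩ ↦ funext fun x ↦ eq_of_linForm_eq hk ?_ ?_⟩
  · rintro rfl
    exact ⟨linForm_fst_ofLinForms hk, linForm_snd_ofLinForms hk⟩
  · rw [hfst, linForm_fst_ofLinForms]
  · rw [hsnd, linForm_snd_ofLinForms]

theorem isNQuasigroup_ofLinForms (hαβ : ∀ i, α i ≠ β i) :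
    IsNQuasigroup (ofLinForms hk α β c h) := by
  refine isNQuasigroup_iff_injective.2 fun a i v w hvw ↦ ?_
  have hα : linForm (α i) v = linForm (α i) w := by
    simpa only [linForm_fst_ofLinForms, add_left_inj, linFormSum_update_eq_update_iff]
      using congrArg (linForm k) hvw
  have hbits : linForms α (update a i v) = linForms α (update a i w) := by
    ext j
    obtain rfl | hj := eq_or_ne j i <;> simp [linForms, *]
  have hβ : linForm (β i) v = linForm (β i) w := by
    simpa only [linForm_snd_ofLinForms, hbits, add_left_inj, linFormSum_update_eq_update_iff]
      using congrArg (linForm k') hvw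
  exact eq_of_linForm_eq (hαβ i) hα hβ

end OfLinForms

theorem IsNQuasigroup.exists_eq_ofLinForms (hf : IsNQuasigroup f) (hk : k ≠ k')
    (hα : ∀ x, linForm k (f x) = linFormSum α x + c) (hαβ : ∀ i, α i ≠ β i) :
    ∃ h, f = ofLinForms hk α β c h := by
  have hfactors :
      (fun x ↦ linForm k' (f x) + linFormSum β x).FactorsThrough (linForms α) :=
    factorsThrough_piMap_of_forall_update_eq (hf.linForm_add_linFormSum_update hk hα hαβ)
  obtain ⟨h, hh⟩ := (factorsThrough_iff _).1 hfactors
  refine ⟨h, (eq_ofLinForms_iff hk).2 ⟨hα, fun x ↦ ?_⟩⟩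
  rw [← comp_apply (f := h), ← hh, add_comm, add_assoc, CharTwo.add_self_eq_zero, add_zero]

end Affine

/-- The `n`-quasigroups affine along `k`; the semilinear ones are their union over `k`. -/
def affineQuasigroups (n : ℕ) (k : Fin 3) : Set ((Fin n → V4) → V4) :=
  {f | IsNQuasigroup f ∧ IsAffineAlong k f}

section Count

variable {n : ℕ} {k k' : Fin 3}

theorem range_ofLinForms_add_one (hk : k ≠ k') :
    (Set.range fun p : (Fin n → Fin 3) × ZMod 2 × ((Fin n → ZMod 2) → ZMod 2) ↦
      ofLinForms hk p.1 (p.1 + 1) p.2.1 p.2.2) = affineQuasigroups n k := by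
  have hne (α : Fin n → Fin 3) (i : Fin n) : α i ≠ (α + 1) i := by simp
  refine Set.Subset.antisymm ?_ ?_
  · rintro _ ⟨⟨α, c, h⟩, rfl⟩
    exact ⟨isNQuasigroup_ofLinForms hk (hne α), α, c, linForm_fst_ofLinForms hk⟩
  · rintro f ⟨hf, α, c, hα⟩
    obtain ⟨h, rfl⟩ := hf.exists_eq_ofLinForms hk hα (hne α)
    exact ⟨(α, c, h), rfl⟩

theorem ofLinForms_add_one_injective (hk : k ≠ k') :
    Injective fun p : (Fin n → Fin 3) × ZMod 2 × ((Fin n → ZMod 2) → ZMod 2) ↦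
      ofLinForms hk p.1 (p.1 + 1) p.2.1 p.2.2 := by
  rintro ⟨α, c, h⟩ ⟨β, d, g⟩ heq
  obtain ⟨hfst, hsnd⟩ := (eq_ofLinForms_iff hk).1 heq
  simp only [linForm_fst_ofLinForms, linForm_snd_ofLinForms] at hfst hsnd
  obtain ⟨rfl, rfl⟩ := eq_and_eq_of_linFormSum_add_eq hfst
  have hhg : h = g := (linForms_surjective α).injective_comp_right <| funext fun x ↦
    add_left_cancel (hsnd x)
  rw [hhg]

theorem ncard_affineQuasigroups (n : ℕ) (k : Fin 3) :
    (affineQuasigroups n k).ncard = 3 ^ n * (2 * 2 ^ 2 ^ n) := by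
  have hk : k ≠ k + 1 := by simp
  rw [← range_ofLinForms_add_one hk, Set.ncard_range_of_injective (ofLinForms_add_one_injective hk)]
  simp

theorem range_ofLinForms_const (hk : k ≠ k') :
    (Set.range fun p : (Fin n → {q : Fin 3 × Fin 3 // q.1 ≠ q.2}) × ZMod 2 × ZMod 2 ↦
      ofLinForms hk (fun i ↦ (p.1 i).1.1) (fun i ↦ (p.1 i).1.2) p.2.1 fun _ ↦ p.2.2) =
      affineQuasigroups n k ∩ affineQuasigroups n k' := by
  refine Set.Subset.antisymm ?_ ?_
  · rintro _ ⟨⟨γ, c, d⟩, rfl⟩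
    have hq := isNQuasigroup_ofLinForms (c := c) (h := fun _ ↦ d) hk fun i ↦ (γ i).2
    exact ⟨⟨hq, _, c, linForm_fst_ofLinForms hk⟩,
      ⟨hq, _, d, linForm_snd_ofLinForms hk⟩⟩
  · rintro f ⟨⟨hf, α, c, hα⟩, ⟨-, β, d, hβ⟩⟩
    exact ⟨(fun i ↦ ⟨(α i, β i), hf.linForm_index_ne hk hα hβ i⟩, c, d),
      ((eq_ofLinForms_iff hk).2 ⟨hα, hβ⟩).symm⟩

theorem ofLinForms_const_injective (hk : k ≠ k') :
    Injective fun p : (Fin n → {q : Fin 3 × Fin 3 // q.1 ≠ q.2}) × ZMod 2 × ZMod 2 ↦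
      ofLinForms hk (fun i ↦ (p.1 i).1.1) (fun i ↦ (p.1 i).1.2) p.2.1 fun _ ↦ p.2.2 := by
  rintro ⟨γ, c, d⟩ ⟨γ', c', d'⟩ heq
  obtain ⟨hfst, hsnd⟩ := (eq_ofLinForms_iff hk).1 heq
  simp only [linForm_fst_ofLinForms, linForm_snd_ofLinForms] at hfst hsnd
  obtain ⟨hα, rfl⟩ := eq_and_eq_of_linFormSum_add_eq hfst
  obtain ⟨hβ, rfl⟩ := eq_and_eq_of_linFormSum_add_eq hsnd
  have hγ : γ = γ' := funext fun i ↦ Subtype.ext (Prod.ext (congrFun hα i) (congrFun hβ i))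
  rw [hγ]

theorem ncard_affineQuasigroups_inter (hk : k ≠ k') :
    (affineQuasigroups n k ∩ affineQuasigroups n k').ncard = 6 ^ n * 4 := by
  have hpairs : Fintype.card {q : Fin 3 × Fin 3 // q.1 ≠ q.2} = 6 := by decide
  rw [← range_ofLinForms_const hk, Set.ncard_range_of_injective (ofLinForms_const_injective hk)]
  simp [-ne_eq, hpairs]

theorem affineQuasigroups_inter_eq_iInter (hk : k ≠ k') :
    affineQuasigroups n k ∩ affineQuasigroups n k' = ⋂ l, affineQuasigroups n l :=
  Set.Subset.antisymm
    (fun _ hf ↦ Set.mem_iInter.2 fun l ↦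
      ⟨hf.1.1, hf.1.1.isAffineAlong_of_ne hk hf.1.2 hf.2.2 l⟩)
    (Set.subset_inter (Set.iInter_subset _ k) (Set.iInter_subset _ k'))

theorem iUnion_affineQuasigroups (n : ℕ) :
    ⋃ k, affineQuasigroups n k = {f | IsNQuasigroup f ∧ IsSemilinear f} := by
  ext f
  simp [affineQuasigroups, isSemilinear_iff_exists_isAffineAlong]

end Count

/-- The number of semilinear `n`-quasigroups of order 4 equals
`3^(n+1)·2^(2^n + 1) − 8·6^n`. -/
theorem card_semilinear (n : ℕ) (hn : 1 ≤ n) :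
    Nat.card {f : (Fin n → V4) → V4 // IsNQuasigroup f ∧ IsSemilinear f} =
      3 ^ (n + 1) * 2 ^ (2 ^ n + 1) - 8 * 6 ^ n := by
  have hinter : (⋂ k, affineQuasigroups n k).ncard = 6 ^ n * 4 := by
    rw [← affineQuasigroups_inter_eq_iInter zero_ne_one,
      ncard_affineQuasigroups_inter zero_ne_one]
  have hunion := ncard_iUnion_add_of_pairwise_inter_eq
    (fun _ ↦ Set.toFinite _) fun _ _ hk ↦ affineQuasigroups_inter_eq_iInter (n := n) hk
  simp only [ncard_affineQuasigroups, hinter, iUnion_affineQuasigroups, sum_const, card_univ,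
    Fintype.card_fin, smul_eq_mul] at hunion
  have hpow : 3 ^ (n + 1) * 2 ^ (2 ^ n + 1) = 3 * (3 ^ n * (2 * 2 ^ 2 ^ n)) := by ring
  rw [← Set.coe_ofPred, Nat.card_coe_set_eq, hpow]
  omega
end

section
/- Let S ⊆ Σ^n be a splittable double-MDS-code and suppose that for some k ∈ {1,…,n} and a ∈ Σ the layer L = S|_k^a is a linear double-code. Then (a) there exists b ∈ Σ such that the layer S|_k^b equals Σ^(n−1) \ L, and (b) Σ^n \ S is a splittable double-MDS-code. -/
/-- The `k`-edge through `x`. -/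
def kEdge {n : ℕ} (x : Fin n → V4) (k : Fin n) : Set (Fin n → V4) :=
  {y | ∃ a : V4, y = Function.update x k a}

/-- A (distance 2) MDS code: every edge meets it in exactly one vertex. -/
def IsMDSCode {n : ℕ} (C : Set (Fin n → V4)) : Prop :=
  ∀ (x : Fin n → V4) (k : Fin n), (kEdge x k ∩ C).ncard = 1

/-- A double-MDS-code: every edge meets it in exactly two vertices. -/
def IsDoubleMDSCode {n : ℕ} (S : Set (Fin n → V4)) : Prop :=
  ∀ (x : Fin n → V4) (k : Fin n), (kEdge x k ∩ S).ncard = 2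

/-- A set is splittable if it is the union of two disjoint MDS codes. -/
def IsSplittable {n : ℕ} (S : Set (Fin n → V4)) : Prop :=
  ∃ C₁ C₂ : Set (Fin n → V4),
    IsMDSCode C₁ ∧ IsMDSCode C₂ ∧ Disjoint C₁ C₂ ∧ S = C₁ ∪ C₂

/-- The `y`-th layer of `S ⊆ Σ^(n+1)` in direction `k`, a subset of `Σ^n`. -/
def layer {n : ℕ} (S : Set (Fin (n + 1) → V4)) (k : Fin (n + 1)) (y : V4) :
    Set (Fin n → V4) :=
  {x | k.insertNth y x ∈ S}

/-!
Over direction `k` the two MDS codes are graphs of `n`-ary quasigroups `f` and `g` with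
`f x ≠ g x`. Identify `Σ` with `ℤ₂²`, so that bitwise xor is addition; the nonzero difference
`f x ^^^ g x` has three possible values, matching the three partitions of `Σ` into the pair
`{f x, g x}` and its complement. The theorem reduces to: *some nonzero `d` is never a
difference*. Indeed translation by `d` then maps `{f x, g x}` onto its complement for every `x`,
so it carries the two given MDS codes to a splitting of the complement, and the layer over
`a ^^^ d` is the complement of the layer over `a`.

By linearity, along every line each difference that occurs over one of the sets `T i`, `(T i)ᶜ`
also occurs over the other one. Hence every difference is seen inside every box, a product of sets
`T i` and `(T i)ᶜ`, and avoidance of a difference can be tested on a single box.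

The existence of `d` is proved by induction on `n`, fixing coordinate `0`. Each layer avoids a
difference. If two layers `r`, `s` in the same half of `Σ` avoid `u ≠ v`, then on a box where these
layers miss `a`, and hence hit `a ^^^ u` and `a ^^^ v`, each of the conditions `f = a ^^^ u`,
`f = a ^^^ v` and, on the other two layers, `f = a` flips with every step inside the box. So their
mutual agreement is constant on the box, and either `u ^^^ v` is avoided altogether or one of the
other two layers has constant difference `u ^^^ v`. Doing this for both halves of `Σ` leaves a
configuration with a constant layer in each half, where an avoided difference is read off directly.
-/

namespace V4

lemma xor_ne_zero : ∀ {p q : V4}, p ≠ q → p ^^^ q ≠ 0 := by decide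

lemma xor_ne_left : ∀ {p q : V4}, q ≠ 0 → p ^^^ q ≠ p := by decide

lemma xor_ne_right : ∀ {p q : V4}, p ≠ 0 → p ^^^ q ≠ q := by decide

lemma xor_right_bijective : ∀ d : V4, Function.Bijective fun p : V4 => p ^^^ d := by decide

lemma xor_eq_iff_hit_iff : ∀ {p q d : V4}, p ≠ q → d ≠ 0 → ∀ a,
    (p ^^^ q = d ↔ ((p = a ^^^ d ∨ q = a ^^^ d) ↔ (p = a ∨ q = a))) := by decide

lemma eq_xor_or_eq_xor_iff : ∀ {p q d : V4}, p ≠ q → d ≠ 0 → p ^^^ q ≠ d → ∀ a,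
    (p = a ^^^ d ∨ q = a ^^^ d ↔ ¬ (p = a ∨ q = a)) := by decide

lemma xor_eq_iff_eq_xor : ∀ {p d a : V4}, p ^^^ d = a ↔ p = a ^^^ d := by decide

lemma xor_xor_cancel_left : ∀ a d : V4, (a ^^^ d) ^^^ a = d := by decide

lemma eq_xor_xor_of_ne : ∀ {a u v p : V4}, u ≠ 0 → v ≠ 0 → u ≠ v →
    p ≠ a → p ≠ a ^^^ u → p ≠ a ^^^ v → p = a ^^^ (u ^^^ v) := by decide

lemma eq_or_eq_of_mem_iff : ∀ {T : Finset V4}, T.card = 2 → ∀ {c d e : V4}, d ≠ c →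
    (d ∈ T ↔ c ∈ T) → (e ∈ T ↔ c ∈ T) → e = c ∨ e = d := by decide

lemma exists_ne_mem_iff : ∀ {T : Finset V4}, T.card = 2 → ∀ c : V4,
    ∃ d ≠ c, (d ∈ T ↔ c ∈ T) := by decide

lemma exists_mem_iff_mem : ∀ {P Q : Finset V4}, P.card = 2 → Q.card = 2 → ∀ {c : V4},
    (c ∈ P ↔ c ∈ Q) → ∃ d, (d ∈ P ↔ d ∈ Q) ∧ ¬ (d ∈ P ↔ c ∈ P) := by decide

end V4

/-- Two disjoint permutations `F`, `G` of `Σ` which take the value `a` at `p` and `q`, the value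
`a ^^^ u` at `r` and the value `a ^^^ v` at `s`. In the induction step, `F` and `G` are the
restrictions of two quasigroups to a line in direction `0`, whose layers `r` and `s` avoid the
differences `u` and `v`. -/
structure LinePattern (F G : V4 → V4) (a u v p q r s : V4) : Prop where
  left : F.Injective
  right : G.Injective
  ne : ∀ c, F c ≠ G c
  u_ne_v : u ≠ v
  p_ne_q : p ≠ q
  r_ne_s : r ≠ s
  hit_p : F p = a ∨ G p = a
  hit_q : F q = a ∨ G q = a
  hit_r : F r = a ^^^ u ∨ G r = a ^^^ u
  hit_s : F s = a ^^^ v ∨ G s = a ^^^ v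
  miss_r : ¬ (F r = a ∨ G r = a)
  miss_s : ¬ (F s = a ∨ G s = a)

namespace LinePattern

variable {F G : V4 → V4} {a u v p q r s : V4}

lemma comm (h : LinePattern F G a u v p q r s) : LinePattern G F a u v p q r s where
  left := h.right
  right := h.left
  ne c := (h.ne c).symm
  u_ne_v := h.u_ne_v
  p_ne_q := h.p_ne_q
  r_ne_s := h.r_ne_s
  hit_p := h.hit_p.symm
  hit_q := h.hit_q.symm
  hit_r := h.hit_r.symm
  hit_s := h.hit_s.symm
  miss_r := mt Or.symm h.miss_r
  miss_s := mt Or.symm h.miss_s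

lemma swap (h : LinePattern F G a u v p q r s) : LinePattern F G a u v q p r s :=
  { h with p_ne_q := h.p_ne_q.symm, hit_p := h.hit_q, hit_q := h.hit_p }

lemma u_ne_zero (h : LinePattern F G a u v p q r s) : u ≠ 0 := by
  rintro rfl
  exact h.miss_r (by simpa using h.hit_r)

lemma v_ne_zero (h : LinePattern F G a u v p q r s) : v ≠ 0 := by
  rintro rfl
  exact h.miss_s (by simpa using h.hit_s)

lemma left_q_eq_iff (h : LinePattern F G a u v p q r s) : F q = a ↔ ¬ F p = a := by
  constructor
  · exact fun hq hp => h.left.ne h.p_ne_q (hp.trans hq.symm)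
  · exact fun hp => h.hit_q.resolve_right fun hq =>
      h.right.ne h.p_ne_q ((h.hit_p.resolve_left hp).trans hq.symm)

lemma xor_eq_of_left (h : LinePattern F G a u v p q r s) (hp : F p = a) (hr : F r = a ^^^ u)
    (hs : F s = a ^^^ v) : F q ^^^ G q = u ^^^ v := by
  have hGq : G q = a := h.hit_q.resolve_left fun hq => h.left_q_eq_iff.mp hq hp
  have hqr : q ≠ r := by rintro rfl; exact h.miss_r h.hit_q
  have hqs : q ≠ s := by rintro rfl; exact h.miss_s h.hit_q
  have hFq : F q = a ^^^ (u ^^^ v) :=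
    V4.eq_xor_xor_of_ne h.u_ne_zero h.v_ne_zero h.u_ne_v
      (hp ▸ h.left.ne h.p_ne_q.symm) (hr ▸ h.left.ne hqr) (hs ▸ h.left.ne hqs)
  rw [hFq, hGq, V4.xor_xor_cancel_left]

lemma xor_eq_of_agree (h : LinePattern F G a u v p q r s) (hpr : F p = a ↔ F r = a ^^^ u)
    (hrs : F r = a ^^^ u ↔ F s = a ^^^ v) : F q ^^^ G q = u ^^^ v := by
  by_cases hp : F p = a
  · exact h.xor_eq_of_left hp (hpr.mp hp) (hrs.mp (hpr.mp hp))
  · have hr := mt hpr.mpr hp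
    rw [Fin.xor_comm]
    exact h.comm.xor_eq_of_left (h.hit_p.resolve_left hp) (h.hit_r.resolve_left hr)
      (h.hit_s.resolve_left (mt hrs.mpr hr))

lemma xor_ne_of_left_right (h : LinePattern F G a u v p q r s) (hr : F r = a ^^^ u)
    (hs : G s = a ^^^ v) : F p ^^^ G p ≠ u ^^^ v := by
  have hFs : F s = a ^^^ (u ^^^ v) :=
    V4.eq_xor_xor_of_ne h.u_ne_zero h.v_ne_zero h.u_ne_v (fun e => h.miss_s (.inl e))
      (hr ▸ h.left.ne h.r_ne_s.symm) (hs ▸ h.ne s)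
  have hGr : G r = a ^^^ (u ^^^ v) :=
    V4.eq_xor_xor_of_ne h.u_ne_zero h.v_ne_zero h.u_ne_v (fun e => h.miss_r (.inr e))
      (hr ▸ (h.ne r).symm) (hs ▸ h.right.ne h.r_ne_s)
  rw [Ne, V4.xor_eq_iff_hit_iff (h.ne p) (V4.xor_ne_zero h.u_ne_v) a]
  intro hiff
  rcases hiff.mpr h.hit_p with hFp | hGp
  · obtain rfl := h.left (hFp.trans hFs.symm)
    exact h.miss_s h.hit_p
  · obtain rfl := h.right (hGp.trans hGr.symm)
    exact h.miss_r h.hit_p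

lemma xor_ne_of_disagree (h : LinePattern F G a u v p q r s)
    (hrs : ¬ (F r = a ^^^ u ↔ F s = a ^^^ v)) : F p ^^^ G p ≠ u ^^^ v := by
  by_cases hr : F r = a ^^^ u
  · exact h.xor_ne_of_left_right hr (h.hit_s.resolve_left fun hs => hrs (iff_of_true hr hs))
  · have hs : F s = a ^^^ v := by tauto
    rw [Fin.xor_comm]
    exact h.comm.xor_ne_of_left_right (h.hit_r.resolve_left hr) hs

end LinePattern

/-- `f` is an `n`-ary quasigroup: fixing all arguments but one leaves a permutation. -/
def IsQuasigroup {n : ℕ} {α : Type*} (f : (Fin n → α) → α) : Prop :=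
  ∀ x i, Function.Bijective fun c => f (Function.update x i c)

/-- `x` and `y` lie in the same box, that is, in the same cell of the partition of `ι → α` into the
products of sets `T i` and complements of sets `T i`. -/
def SameBox {ι α : Type*} (T : ι → Finset α) (x y : ι → α) : Prop :=
  ∀ i, x i ∈ T i ↔ y i ∈ T i

/-- The predicate `A` flips along every pair of neighbours in the box of `x`. -/
def AlternatesOnBox {ι α : Type*} [DecidableEq ι] (T : ι → Finset α) (x : ι → α)
    (A : (ι → α) → Prop) : Prop :=
  ∀ y i c, SameBox T y x → c ≠ y i → SameBox T (Function.update y i c) x →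
    (A (Function.update y i c) ↔ ¬ A y)

section Box

variable {ι α : Type*} {T : ι → Finset α} {x y : ι → α}

lemma SameBox.refl (T : ι → Finset α) (x : ι → α) : SameBox T x x := fun _ => Iff.rfl

variable [DecidableEq ι]

lemma SameBox.update (h : SameBox T y x) {i : ι} {c : α} (hc : c ∈ T i ↔ y i ∈ T i) :
    SameBox T (Function.update y i c) x := by
  intro j
  rcases eq_or_ne j i with rfl | hj
  · rw [Function.update_self, hc, h j]
  · rw [Function.update_of_ne hj, h j]

variable [Finite ι]

lemma SameBox.induction {P : (ι → α) → Prop} (base : P x)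
    (step : ∀ z i c, SameBox T z x → P z → (c ∈ T i ↔ z i ∈ T i) → P (Function.update z i c))
    (hyx : SameBox T y x) : P y := by
  have := Fintype.ofFinite ι
  have walk : ∀ s : Finset ι, SameBox T (s.piecewise y x) x ∧ P (s.piecewise y x) := by
    intro s
    induction s using Finset.induction_on with
    | empty => simpa using ⟨SameBox.refl T x, base⟩
    | insert i s hi ih =>
      have hmove : y i ∈ T i ↔ s.piecewise y x i ∈ T i := by
        rw [Finset.piecewise_eq_of_notMem _ _ _ hi, hyx i]
      rw [Finset.piecewise_insert]
      exact ⟨ih.1.update hmove, step _ _ _ ih.1 ih.2 hmove⟩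
  simpa using (walk Finset.univ).2

lemma AlternatesOnBox.iff_iff {A B : (ι → α) → Prop} (hA : AlternatesOnBox T x A)
    (hB : AlternatesOnBox T x B) (hyx : SameBox T y x) : (A y ↔ B y) ↔ (A x ↔ B x) := by
  refine SameBox.induction (P := fun z => (A z ↔ B z) ↔ (A x ↔ B x)) Iff.rfl ?_ hyx
  intro z i c hz ih hc
  rcases eq_or_ne c (z i) with rfl | hne
  · rwa [Function.update_eq_self]
  · rw [hA z i c hz hne (hz.update hc), hB z i c hz hne (hz.update hc), not_iff_not, ih]

end Box

namespace IsQuasigroup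

variable {n : ℕ} {α : Type*}

lemma update_ne {f : (Fin n → α) → α} (hf : IsQuasigroup f) {x : Fin n → α} {i : Fin n} {c : α}
    (hc : c ≠ x i) : f (Function.update x i c) ≠ f x := by
  simpa only [Function.update_eq_self] using (hf x i).injective.ne hc

lemma alternatesOnBox {f g : (Fin n → α) → α} (hf : IsQuasigroup f) (hg : IsQuasigroup g)
    {T : Fin n → Finset α} {x : Fin n → α} {v : α}
    (hv : ∀ y, SameBox T y x → f y = v ∨ g y = v) : AlternatesOnBox T x fun y => f y = v := by
  intro y i c hy hc hy'
  constructor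
  · exact fun hfy' hfy => hf.update_ne hc (hfy'.trans hfy.symm)
  · intro hfy
    have hgy : g y = v := (hv y hy).resolve_left hfy
    exact (hv _ hy').resolve_right fun hgy' => hg.update_ne hc (hgy'.trans hgy.symm)

lemma exists_finset_mem_iff_hit {f g : (Fin n → α) → α} (hf : IsQuasigroup f)
    (hg : IsQuasigroup g) (hne : ∀ x, f x ≠ g x) (x : Fin n → α) (i : Fin n) (v : α) :
    ∃ P : Finset α, P.card = 2 ∧
      ∀ c, c ∈ P ↔ (f (Function.update x i c) = v ∨ g (Function.update x i c) = v) := by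
  classical
  obtain ⟨p, hp⟩ := (hf x i).surjective v
  obtain ⟨q, hq⟩ := (hg x i).surjective v
  refine ⟨{p, q}, Finset.card_pair ?_, fun c => ?_⟩
  · rintro rfl
    exact hne _ (hp.trans hq.symm)
  · rw [Finset.mem_insert, Finset.mem_singleton, ← hp, (hf x i).injective.eq_iff,
      hp, ← hq, (hg x i).injective.eq_iff]

lemma comp_cons {f : (Fin (n + 1) → α) → α} (hf : IsQuasigroup f) (c : α) :
    IsQuasigroup fun x => f (Fin.cons c x) := by
  intro x i
  simpa only [Fin.cons_update] using hf (Fin.cons c x) i.succ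

lemma cons_bijective [Nonempty α] {f : (Fin (n + 1) → α) → α} (hf : IsQuasigroup f)
    (x : Fin n → α) : Function.Bijective fun c => f (Fin.cons c x) := by
  obtain ⟨d⟩ := ‹Nonempty α›
  simpa only [Fin.update_cons_zero] using hf (Fin.cons d x) 0

end IsQuasigroup

/-- The data of a splittable double-MDS-code with a linear layer: the two MDS codes are the graphs
of the disjoint quasigroups `f` and `g`, and the layer over the value `a` is a linear double-code
with factors `T i`. Linearity is recorded up to complementation, which makes it stable under
fixing a coordinate. Below, `x` hits a value `v` if `f x = v ∨ g x = v`. -/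
structure IsLinearSplitting {n : ℕ} (f g : (Fin n → V4) → V4) (T : Fin n → Finset V4) (a : V4) :
    Prop where
  left : IsQuasigroup f
  right : IsQuasigroup g
  ne : ∀ x, f x ≠ g x
  card_eq_two : ∀ i, (T i).card = 2
  hit_update_iff : ∀ x i c,
    ((f (Function.update x i c) = a ∨ g (Function.update x i c) = a) ↔ (f x = a ∨ g x = a)) ↔
      (c ∈ T i ↔ x i ∈ T i)

namespace IsLinearSplitting

section Differences

variable {n : ℕ} {f g : (Fin n → V4) → V4} {T : Fin n → Finset V4} {a : V4}

lemma xor_ne_zero (h : IsLinearSplitting f g T a) (x : Fin n → V4) : f x ^^^ g x ≠ 0 :=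
  V4.xor_ne_zero (h.ne x)

lemma hit_iff_of_sameBox (h : IsLinearSplitting f g T a) {x y : Fin n → V4}
    (hyx : SameBox T y x) : (f y = a ∨ g y = a) ↔ (f x = a ∨ g x = a) := by
  refine SameBox.induction (P := fun z => (f z = a ∨ g z = a) ↔ (f x = a ∨ g x = a)) Iff.rfl ?_ hyx
  intro z i c _ ih hc
  rw [(h.hit_update_iff z i c).mpr hc, ih]

lemma exists_update_xor_eq (h : IsLinearSplitting f g T a) (x : Fin n → V4) (i : Fin n) :
    ∃ c, ¬ (c ∈ T i ↔ x i ∈ T i) ∧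
      f (Function.update x i c) ^^^ g (Function.update x i c) = f x ^^^ g x := by
  have hd := h.xor_ne_zero x
  obtain ⟨P, hPcard, hP⟩ := h.left.exists_finset_mem_iff_hit h.right h.ne x i a
  obtain ⟨Q, hQcard, hQ⟩ := h.left.exists_finset_mem_iff_hit h.right h.ne x i (a ^^^ (f x ^^^ g x))
  have xor_eq_iff_mem (c : V4) :
      f (Function.update x i c) ^^^ g (Function.update x i c) = f x ^^^ g x ↔ (c ∈ P ↔ c ∈ Q) := by
    rw [V4.xor_eq_iff_hit_iff (h.ne _) hd a, ← hP, ← hQ, iff_comm (a := c ∈ P)]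
  obtain ⟨c, hcPQ, hcP⟩ := V4.exists_mem_iff_mem hPcard hQcard (c := x i)
    ((xor_eq_iff_mem _).mp (by rw [Function.update_eq_self]))
  refine ⟨c, ?_, (xor_eq_iff_mem c).mpr hcPQ⟩
  have hPx : x i ∈ P ↔ (f x = a ∨ g x = a) := by simpa only [Function.update_eq_self] using hP (x i)
  rwa [← h.hit_update_iff, ← hP, ← hPx]

lemma exists_sameBox_xor_eq (h : IsLinearSplitting f g T a) (x y : Fin n → V4) :
    ∃ z, SameBox T z y ∧ f z ^^^ g z = f x ^^^ g x := by
  suffices ∀ s : Finset (Fin n), ∃ z, (∀ i ∈ s, z i ∈ T i ↔ y i ∈ T i) ∧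
      f z ^^^ g z = f x ^^^ g x by
    simpa [SameBox] using this Finset.univ
  intro s
  induction s using Finset.induction_on with
  | empty => exact ⟨x, by simp, rfl⟩
  | insert i s hi ih =>
    obtain ⟨z, hzy, hz⟩ := ih
    by_cases hzi : z i ∈ T i ↔ y i ∈ T i
    · exact ⟨z, Finset.forall_mem_insert .. |>.mpr ⟨hzi, hzy⟩, hz⟩
    · obtain ⟨c, hc, hcz⟩ := h.exists_update_xor_eq z i
      refine ⟨Function.update z i c, Finset.forall_mem_insert .. |>.mpr ⟨?_, fun j hj => ?_⟩,
        hcz.trans hz⟩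
      · rw [Function.update_self]
        tauto
      · rw [Function.update_of_ne (ne_of_mem_of_not_mem hj hi)]
        exact hzy j hj

lemma forall_xor_of_box (h : IsLinearSplitting f g T a) {P : V4 → Prop} (y : Fin n → V4)
    (hP : ∀ z, SameBox T z y → P (f z ^^^ g z)) (x : Fin n → V4) : P (f x ^^^ g x) := by
  obtain ⟨z, hzy, hzx⟩ := h.exists_sameBox_xor_eq x y
  exact hzx ▸ hP z hzy

end Differences

section Layers

variable {n : ℕ} {f g : (Fin (n + 1) → V4) → V4} {T : Fin (n + 1) → Finset V4} {a : V4}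

lemma comp_cons (h : IsLinearSplitting f g T a) (c : V4) :
    IsLinearSplitting (fun x => f (Fin.cons c x)) (fun x => g (Fin.cons c x))
      (fun i => T i.succ) a where
  left := h.left.comp_cons c
  right := h.right.comp_cons c
  ne x := h.ne _
  card_eq_two i := h.card_eq_two i.succ
  hit_update_iff x i d := by
    simpa only [Fin.cons_update, Fin.cons_succ] using h.hit_update_iff (Fin.cons c x) i.succ d

lemma hit_cons_iff (h : IsLinearSplitting f g T a) (x : Fin n → V4) (c d : V4) :
    ((f (Fin.cons c x) = a ∨ g (Fin.cons c x) = a) ↔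
      (f (Fin.cons d x) = a ∨ g (Fin.cons d x) = a)) ↔ (c ∈ T 0 ↔ d ∈ T 0) := by
  simpa only [Fin.update_cons_zero, Fin.cons_zero] using h.hit_update_iff (Fin.cons d x) 0 c

lemma exists_cons_xor_eq (h : IsLinearSplitting f g T a) (x : Fin n → V4) (c : V4) :
    ∃ d, ¬ (d ∈ T 0 ↔ c ∈ T 0) ∧
      f (Fin.cons d x) ^^^ g (Fin.cons d x) = f (Fin.cons c x) ^^^ g (Fin.cons c x) := by
  simpa only [Fin.update_cons_zero, Fin.cons_zero] using h.exists_update_xor_eq (Fin.cons c x) 0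

lemma forall_xor_of_block (h : IsLinearSplitting f g T a) {P : V4 → Prop} (y : Fin n → V4)
    (c : V4)
    (hP : ∀ d, (d ∈ T 0 ↔ c ∈ T 0) → ∀ x, SameBox (fun i => T i.succ) x y →
      P (f (Fin.cons d x) ^^^ g (Fin.cons d x)))
    (x : Fin (n + 1) → V4) : P (f x ^^^ g x) := by
  refine h.forall_xor_of_box (Fin.cons c y) (fun z hz => ?_) x
  rw [← Fin.cons_self_tail z]
  exact hP (z 0) (hz 0) (Fin.tail z) fun i => hz i.succ

lemma exists_linePattern {f g : (Fin (n + 2) → V4) → V4} {T : Fin (n + 2) → Finset V4}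
    (h : IsLinearSplitting f g T a) {r s u v : V4} (hrs : r ≠ s) (hT : s ∈ T 0 ↔ r ∈ T 0)
    (hu : u ≠ 0) (hv : v ≠ 0) (huv : u ≠ v)
    (hru : ∀ x, f (Fin.cons r x) ^^^ g (Fin.cons r x) ≠ u)
    (hsv : ∀ x, f (Fin.cons s x) ^^^ g (Fin.cons s x) ≠ v) :
    ∃ p q x, ¬ (p ∈ T 0 ↔ r ∈ T 0) ∧ (q ∈ T 0 ↔ p ∈ T 0) ∧
      ∀ y, SameBox (fun i => T i.succ) y x →
        LinePattern (fun c => f (Fin.cons c y)) (fun c => g (Fin.cons c y)) a u v p q r s := by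
  obtain ⟨p, hpr, -⟩ := h.exists_cons_xor_eq 0 r
  obtain ⟨d, hd⟩ := ((h.comp_cons p).left 0 0).surjective a
  set x : Fin (n + 1) → V4 := Function.update 0 0 d
  obtain ⟨q, hq⟩ := (h.right.cons_bijective x).surjective a
  have hqp : q ∈ T 0 ↔ p ∈ T 0 := (h.hit_cons_iff x q p).mp (iff_of_true (.inr hq) (.inl hd))
  refine ⟨p, q, x, hpr, hqp, fun y hy => ?_⟩
  have hit_p : f (Fin.cons p y) = a ∨ g (Fin.cons p y) = a :=
    ((h.comp_cons p).hit_iff_of_sameBox hy).mpr (.inl hd)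
  have miss_r : ¬ (f (Fin.cons r y) = a ∨ g (Fin.cons r y) = a) :=
    fun hr => hpr ((h.hit_cons_iff y p r).mp (iff_of_true hit_p hr))
  have miss_s : ¬ (f (Fin.cons s y) = a ∨ g (Fin.cons s y) = a) :=
    mt ((h.hit_cons_iff y s r).mpr hT).mp miss_r
  exact {
    left := (h.left.cons_bijective y).injective
    right := (h.right.cons_bijective y).injective
    ne := fun c => h.ne _
    u_ne_v := huv
    p_ne_q := by
      rintro rfl
      exact h.ne _ (hd.trans hq.symm)
    r_ne_s := hrs
    hit_p := hit_p
    hit_q := ((h.hit_cons_iff y q p).mpr hqp).mpr hit_p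
    hit_r := (V4.eq_xor_or_eq_xor_iff (h.ne _) hu (hru y) a).mpr miss_r
    hit_s := (V4.eq_xor_or_eq_xor_iff (h.ne _) hv (hsv y) a).mpr miss_s
    miss_r := miss_r
    miss_s := miss_s }

lemma layer_xor_eq_of_agree (h : IsLinearSplitting f g T a) {u v p q r s : V4} {x : Fin n → V4}
    (hline : ∀ y, SameBox (fun i => T i.succ) y x →
      LinePattern (fun c => f (Fin.cons c y)) (fun c => g (Fin.cons c y)) a u v p q r s)
    (hpr : f (Fin.cons p x) = a ↔ f (Fin.cons r x) = a ^^^ u)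
    (hrs : f (Fin.cons r x) = a ^^^ u ↔ f (Fin.cons s x) = a ^^^ v) (y : Fin n → V4) :
    f (Fin.cons q y) ^^^ g (Fin.cons q y) = u ^^^ v := by
  have hp := (h.left.comp_cons p).alternatesOnBox (h.right.comp_cons p)
    fun y hy => (hline y hy).hit_p
  have hr := (h.left.comp_cons r).alternatesOnBox (h.right.comp_cons r)
    fun y hy => (hline y hy).hit_r
  have hs := (h.left.comp_cons s).alternatesOnBox (h.right.comp_cons s)
    fun y hy => (hline y hy).hit_s
  exact (h.comp_cons q).forall_xor_of_box x (P := (· = u ^^^ v)) (fun z hz =>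
    (hline z hz).xor_eq_of_agree ((hp.iff_iff hr hz).mpr hpr) ((hr.iff_iff hs hz).mpr hrs)) y

lemma xor_ne_of_disagree (h : IsLinearSplitting f g T a) {u v p q r s : V4} {x : Fin n → V4}
    (hline : ∀ y, SameBox (fun i => T i.succ) y x →
      LinePattern (fun c => f (Fin.cons c y)) (fun c => g (Fin.cons c y)) a u v p q r s)
    (hqp : q ∈ T 0 ↔ p ∈ T 0)
    (hrs : ¬ (f (Fin.cons r x) = a ^^^ u ↔ f (Fin.cons s x) = a ^^^ v)) (y : Fin (n + 1) → V4) :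
    f y ^^^ g y ≠ u ^^^ v := by
  have hr := (h.left.comp_cons r).alternatesOnBox (h.right.comp_cons r)
    fun y hy => (hline y hy).hit_r
  have hs := (h.left.comp_cons s).alternatesOnBox (h.right.comp_cons s)
    fun y hy => (hline y hy).hit_s
  have hqp' : q ≠ p := (hline x (SameBox.refl _ x)).p_ne_q.symm
  refine h.forall_xor_of_block (P := (· ≠ u ^^^ v)) x p (fun d hd z hz => ?_) y
  have hdis := mt (hr.iff_iff hs hz).mp hrs
  rcases V4.eq_or_eq_of_mem_iff (h.card_eq_two 0) hqp' hqp hd with rfl | rfl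
  · exact (hline z hz).xor_ne_of_disagree hdis
  · exact (hline z hz).swap.xor_ne_of_disagree hdis

lemma exists_layer_xor_eq_or_xor_ne (h : IsLinearSplitting f g T a) {r s u v : V4} (hrs : r ≠ s)
    (hT : s ∈ T 0 ↔ r ∈ T 0) (hu : u ≠ 0) (hv : v ≠ 0) (huv : u ≠ v)
    (hru : ∀ x, f (Fin.cons r x) ^^^ g (Fin.cons r x) ≠ u)
    (hsv : ∀ x, f (Fin.cons s x) ^^^ g (Fin.cons s x) ≠ v) :
    (∃ c, ¬ (c ∈ T 0 ↔ r ∈ T 0) ∧ ∀ x, f (Fin.cons c x) ^^^ g (Fin.cons c x) = u ^^^ v) ∨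
      ∀ x, f x ^^^ g x ≠ u ^^^ v := by
  rcases n with _ | n
  · refine or_iff_not_imp_left.mpr fun hno => ?_
    obtain ⟨p, hpr, -⟩ := h.exists_cons_xor_eq 0 r
    refine h.forall_xor_of_block (P := (· ≠ u ^^^ v)) 0 p fun d hd x _ hx =>
      hno ⟨d, ?_, fun y => ?_⟩
    · rwa [hd]
    · rwa [Subsingleton.elim y x]
  obtain ⟨p, q, x, hpr, hqp, hline⟩ := h.exists_linePattern hrs hT hu hv huv hru hsv
  by_cases hagree : f (Fin.cons r x) = a ^^^ u ↔ f (Fin.cons s x) = a ^^^ v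
  · left
    by_cases hp : f (Fin.cons p x) = a ↔ f (Fin.cons r x) = a ^^^ u
    · exact ⟨q, by rwa [hqp], h.layer_xor_eq_of_agree hline hp hagree⟩
    · have hq : f (Fin.cons q x) = a ↔ f (Fin.cons r x) = a ^^^ u := by
        rw [(hline x (SameBox.refl _ x)).left_q_eq_iff]
        tauto
      exact ⟨p, hpr, h.layer_xor_eq_of_agree (fun y hy => (hline y hy).swap) hq hagree⟩
  · exact .inr (h.xor_ne_of_disagree hline hqp hagree)

lemma exists_xor_ne_of_layers_xor_eq (h : IsLinearSplitting f g T a) {c d e u v w : V4}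
    (hdc : ¬ (d ∈ T 0 ↔ c ∈ T 0)) (hed : e ∈ T 0 ↔ d ∈ T 0) (hne : e ≠ d) (hw : w ≠ 0)
    (hwu : w ≠ u) (hcu : ∀ x, f (Fin.cons c x) ^^^ g (Fin.cons c x) = u)
    (hdv : ∀ x, f (Fin.cons d x) ^^^ g (Fin.cons d x) = v)
    (hew : ∀ x, f (Fin.cons e x) ^^^ g (Fin.cons e x) ≠ w) :
    ∃ b ≠ 0, ∀ x, f x ^^^ g x ≠ b := by
  have block {i : V4} (hi : i ∈ T 0 ↔ d ∈ T 0) : i = d ∨ i = e :=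
    V4.eq_or_eq_of_mem_iff (h.card_eq_two 0) hne hed hi
  rcases eq_or_ne u v with rfl | huv
  · refine ⟨w, hw, h.forall_xor_of_block (P := (· ≠ w)) 0 d fun i hi x _ => ?_⟩
    rcases block hi with rfl | rfl
    · exact hdv x ▸ hwu.symm
    · exact hew x
  · refine ⟨u ^^^ v, V4.xor_ne_zero huv, h.forall_xor_of_block (P := (· ≠ u ^^^ v)) 0 d
      fun i hi x _ => ?_⟩
    have hu : u ≠ 0 := hcu x ▸ h.xor_ne_zero _
    have hv : v ≠ 0 := hdv x ▸ h.xor_ne_zero _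
    obtain ⟨j, hjc, hju⟩ := h.exists_cons_xor_eq x c
    rw [hcu x] at hju
    have hje : j = e := by
      refine (block (by tauto)).resolve_left ?_
      rintro rfl
      exact huv (hju.symm.trans (hdv x))
    rcases block hi with rfl | rfl
    · exact hdv x ▸ (V4.xor_ne_right hu).symm
    · exact hje ▸ hju ▸ (V4.xor_ne_left hv).symm

lemma exists_xor_ne_or_exists_layer_xor_eq (h : IsLinearSplitting f g T a) {b : V4 → V4}
    (hb : ∀ c, b c ≠ 0) (hne : ∀ c x, f (Fin.cons c x) ^^^ g (Fin.cons c x) ≠ b c) {r s : V4}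
    (hsr : s ≠ r) (hT : s ∈ T 0 ↔ r ∈ T 0) :
    (∃ d ≠ 0, ∀ x, f x ^^^ g x ≠ d) ∨
      ∃ c, ¬ (c ∈ T 0 ↔ r ∈ T 0) ∧ ∀ x, f (Fin.cons c x) ^^^ g (Fin.cons c x) = b r ^^^ b s := by
  rcases eq_or_ne (b r) (b s) with hbrs | hbrs
  · refine .inl ⟨b r, hb r, h.forall_xor_of_block (P := (· ≠ b r)) 0 r fun i hi x _ => ?_⟩
    rcases V4.eq_or_eq_of_mem_iff (h.card_eq_two 0) hsr hT hi with rfl | rfl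
    · exact hne i x
    · exact hbrs ▸ hne i x
  · rcases h.exists_layer_xor_eq_or_xor_ne hsr.symm hT (hb r) (hb s) hbrs (hne r) (hne s) with
      hconst | havoid
    · exact .inr hconst
    · exact .inl ⟨b r ^^^ b s, V4.xor_ne_zero hbrs, havoid⟩

lemma exists_xor_ne_of_forall_layer (h : IsLinearSplitting f g T a) {b : V4 → V4}
    (hb : ∀ c, b c ≠ 0) (hne : ∀ c x, f (Fin.cons c x) ^^^ g (Fin.cons c x) ≠ b c) :
    ∃ d ≠ 0, ∀ x, f x ^^^ g x ≠ d := by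
  obtain ⟨p, hpr, -⟩ := h.exists_cons_xor_eq 0 0
  obtain ⟨s, hsr, hs⟩ := V4.exists_ne_mem_iff (h.card_eq_two 0) 0
  obtain ⟨q, hqp, hq⟩ := V4.exists_ne_mem_iff (h.card_eq_two 0) p
  rcases h.exists_xor_ne_or_exists_layer_xor_eq hb hne hsr hs with hdone | ⟨c, hc, hcu⟩
  · exact hdone
  rcases h.exists_xor_ne_or_exists_layer_xor_eq hb hne hqp hq with hdone | ⟨d, hd, hdv⟩
  · exact hdone
  obtain ⟨e, hed, he⟩ := V4.exists_ne_mem_iff (h.card_eq_two 0) d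
  have hbe : b e ≠ b 0 ^^^ b s := by
    rcases V4.eq_or_eq_of_mem_iff (h.card_eq_two 0) hsr hs (e := e) (by tauto) with rfl | rfl
    · exact (V4.xor_ne_left (hb s)).symm
    · exact (V4.xor_ne_right (hb 0)).symm
  exact h.exists_xor_ne_of_layers_xor_eq (by tauto) he hed (hb e) hbe hcu hdv (hne e)

end Layers

theorem exists_xor_ne {n : ℕ} {f g : (Fin n → V4) → V4} {T : Fin n → Finset V4} {a : V4}
    (h : IsLinearSplitting f g T a) : ∃ d ≠ 0, ∀ x, f x ^^^ g x ≠ d := by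
  induction n with
  | zero =>
    obtain ⟨d, hd, hne⟩ := (by decide : ∀ w : V4, ∃ d ≠ 0, w ≠ d) (f 0 ^^^ g 0)
    exact ⟨d, hd, fun x => by rwa [Subsingleton.elim x 0]⟩
  | succ n ih =>
    choose b hb hne using fun c => ih (h.comp_cons c)
    exact h.exists_xor_ne_of_forall_layer hb hne

end IsLinearSplitting

section Codes

variable {n : ℕ}

lemma isMDSCode_iff {C : Set (Fin n → V4)} :
    IsMDSCode C ↔ ∀ x k, ∃! c, Function.update x k c ∈ C := by
  have edge (x : Fin n → V4) (k : Fin n) :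
      kEdge x k ∩ C = Function.update x k '' {c | Function.update x k c ∈ C} := by
    ext y
    constructor
    · rintro ⟨⟨c, rfl⟩, hc⟩
      exact ⟨c, hc, rfl⟩
    · rintro ⟨c, hc, rfl⟩
      exact ⟨⟨c, rfl⟩, hc⟩
  refine forall₂_congr fun x k => ?_
  rw [edge, Set.ncard_image_of_injective _ (Function.update_injective x k),
    Set.ncard_eq_one]
  exact exists_congr fun c => Set.eq_singleton_iff_unique_mem

lemma IsSplittable.isDoubleMDSCode {S : Set (Fin n → V4)} (h : IsSplittable S) :
    IsDoubleMDSCode S := by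
  obtain ⟨C, D, hC, hD, hCD, rfl⟩ := h
  intro x k
  rw [Set.inter_union_distrib_left,
    Set.ncard_union_eq (hCD.mono Set.inter_subset_right Set.inter_subset_right), hC, hD]

/-- The graph of `f`, with the value of `f` placed at coordinate `k`. -/
def graphCode (k : Fin (n + 1)) (f : (Fin n → V4) → V4) : Set (Fin (n + 1) → V4) :=
  {x | f (k.removeNth x) = x k}

variable {k : Fin (n + 1)} {f g : (Fin n → V4) → V4}

lemma insertNth_mem_graphCode {x : Fin n → V4} {c : V4} :
    k.insertNth c x ∈ graphCode k f ↔ f x = c := by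
  simp [graphCode]

lemma IsQuasigroup.isMDSCode_graphCode (hf : IsQuasigroup f) : IsMDSCode (graphCode k f) := by
  refine isMDSCode_iff.mpr fun x i => ?_
  rcases eq_or_ne i k with rfl | hik
  · simp [graphCode]
  · obtain ⟨j, rfl⟩ := Fin.exists_succAbove_eq hik
    simpa [graphCode, Fin.removeNth_update_succAbove] using
      (hf (k.removeNth x) j).existsUnique (x k)

lemma IsMDSCode.exists_eq_graphCode {C : Set (Fin (n + 1) → V4)} (hC : IsMDSCode C)
    (k : Fin (n + 1)) : ∃ f, IsQuasigroup f ∧ C = graphCode k f := by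
  rw [isMDSCode_iff] at hC
  have hvalue (x : Fin n → V4) : ∃! c, k.insertNth (α := fun _ => V4) c x ∈ C := by
    simpa only [Fin.update_insertNth] using hC (k.insertNth 0 x) k
  choose f hf using fun x => (hvalue x).exists
  refine ⟨f, fun x i => Finite.injective_iff_bijective.mp fun c d (hcd : f _ = f _) => ?_, ?_⟩
  · have hc := hf (Function.update x i c)
    have hd := hf (Function.update x i d)
    rw [hcd, Fin.insertNth_update] at hc
    rw [Fin.insertNth_update] at hd
    exact (hC _ _).unique hc hd
  · ext x
    obtain ⟨c, y, rfl⟩ : ∃ c y, x = k.insertNth c y := ⟨x k, k.removeNth x, by simp⟩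
    rw [insertNth_mem_graphCode]
    exact ⟨fun hx => (hvalue y).unique (hf y) hx, fun hc => hc ▸ hf y⟩

lemma IsQuasigroup.xor_const (hf : IsQuasigroup f) (d : V4) : IsQuasigroup fun x => f x ^^^ d :=
  fun x i => (V4.xor_right_bijective d).comp (hf x i)

lemma disjoint_graphCode_iff : Disjoint (graphCode k f) (graphCode k g) ↔ ∀ x, f x ≠ g x := by
  rw [Set.disjoint_left]
  constructor
  · intro hdisj x hx
    exact hdisj (insertNth_mem_graphCode.mpr rfl) (insertNth_mem_graphCode.mpr hx.symm)
  · exact fun hne x hf hg => hne _ (Eq.trans hf (Eq.symm hg))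

lemma mem_layer_graphCode_union {x : Fin n → V4} {c : V4} :
    x ∈ layer (graphCode k f ∪ graphCode k g) k c ↔ f x = c ∨ g x = c :=
  or_congr insertNth_mem_graphCode insertNth_mem_graphCode

lemma sum_update_eq_one_iff {T : Fin n → Finset V4} (x : Fin n → V4) (i : Fin n) (c : V4) :
    ((∑ j, if Function.update x i c j ∈ T j then (1 : ZMod 2) else 0) = 1 ↔
      (∑ j, if x j ∈ T j then (1 : ZMod 2) else 0) = 1) ↔ (c ∈ T i ↔ x i ∈ T i) := by
  have off_i :
      ∑ j ∈ Finset.univ.erase i, (if Function.update x i c j ∈ T j then (1 : ZMod 2) else 0) =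
        ∑ j ∈ Finset.univ.erase i, (if x j ∈ T j then (1 : ZMod 2) else 0) :=
    Finset.sum_congr rfl fun j hj => by rw [Function.update_of_ne (Finset.ne_of_mem_erase hj)]
  rw [← Finset.add_sum_erase _ _ (Finset.mem_univ i),
    ← Finset.add_sum_erase _ (fun j => if x j ∈ T j then _ else _) (Finset.mem_univ i), off_i,
    Function.update_self]
  generalize ∑ j ∈ Finset.univ.erase i, (if x j ∈ T j then (1 : ZMod 2) else 0) = w
  by_cases hc : c ∈ T i <;> by_cases hx : x i ∈ T i <;> simp only [hc, hx] <;> revert w <;> decide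

lemma exists_isLinearSplitting (hf : IsQuasigroup f) (hg : IsQuasigroup g) (hne : ∀ x, f x ≠ g x)
    {a : V4} (hL : IsLinearDoubleCode (layer (graphCode k f ∪ graphCode k g) k a)) :
    ∃ T, IsLinearSplitting f g T a := by
  obtain ⟨T, hT, hmem⟩ := hL
  refine ⟨T, hf, hg, hne, hT, fun x i c => ?_⟩
  simp only [← mem_layer_graphCode_union (k := k), hmem]
  exact sum_update_eq_one_iff x i c

lemma compl_graphCode_union (hne : ∀ x, f x ≠ g x) {d : V4} (hd : d ≠ 0)
    (hxor : ∀ x, f x ^^^ g x ≠ d) :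
    (graphCode k f ∪ graphCode k g)ᶜ =
      graphCode k (fun x => f x ^^^ d) ∪ graphCode k (fun x => g x ^^^ d) := by
  ext x
  simp only [graphCode, Set.mem_compl_iff, Set.mem_union, Set.mem_ofPred_eq, V4.xor_eq_iff_eq_xor,
    V4.eq_xor_or_eq_xor_iff (hne _) hd (hxor _)]

end Codes

/-- Lemma 1 (on a linear anti-layer): if a splittable double-MDS-code has a
linear layer `L` in some direction, then (a) some layer in the same direction
equals the complement of `L`, and (b) the complement of `S` is a splittable
double-MDS-code. -/
theorem linear_anti_layer (n : ℕ) (S : Set (Fin (n + 1) → V4))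
    (hS : IsDoubleMDSCode S) (hsplit : IsSplittable S)
    (k : Fin (n + 1)) (a : V4) (hL : IsLinearDoubleCode (layer S k a)) :
    (∃ b : V4, layer S k b = (layer S k a)ᶜ) ∧
      IsDoubleMDSCode Sᶜ ∧ IsSplittable Sᶜ := by
  obtain ⟨C, D, hC, hD, hdisj, rfl⟩ := hsplit
  obtain ⟨f, hf, rfl⟩ := hC.exists_eq_graphCode k
  obtain ⟨g, hg, rfl⟩ := hD.exists_eq_graphCode k
  have hne := disjoint_graphCode_iff.mp hdisj
  obtain ⟨T, hfg⟩ := exists_isLinearSplitting hf hg hne hL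
  obtain ⟨d, hd, hxor⟩ := hfg.exists_xor_ne
  have hcompl := compl_graphCode_union (k := k) hne hd hxor
  have hsplit' : IsSplittable (graphCode k f ∪ graphCode k g)ᶜ :=
    ⟨_, _, (hf.xor_const d).isMDSCode_graphCode, (hg.xor_const d).isMDSCode_graphCode,
      disjoint_graphCode_iff.mpr fun x => (V4.xor_right_bijective d).injective.ne (hne x), hcompl⟩
  refine ⟨⟨a ^^^ d, ?_⟩, hsplit'.isDoubleMDSCode, hsplit'⟩
  ext x
  rw [Set.mem_compl_iff, mem_layer_graphCode_union, mem_layer_graphCode_union,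
    V4.eq_xor_or_eq_xor_iff (hne x) hd (hxor x)]
end

section
/- Let q be an n-quasigroup of order 4 (n ≥ 3) and suppose that for some α ∈ Σ the layer q_α, defined by q_α(x₁,…,x_{n−1}) = q(x₁,…,x_{n−1},α), is a semilinear (n−1)-quasigroup. Then q is semilinear or decomposable. -/
/-- A decomposable `n`-quasigroup:
`f(x₁,…,xₙ) = h(g(x_{σ(1)},…,x_{σ(m)}), x_{σ(m+1)},…,x_{σ(n)})` for some
`2 ≤ m < n`, an `(n−m+1)`-quasigroup `h`, an `m`-quasigroup `g` and a
permutation `σ`. -/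
def IsDecomposable {n : ℕ} (f : (Fin n → V4) → V4) : Prop :=
  ∃ (m : ℕ) (_ : 2 ≤ m) (hm : m < n)
    (h : (Fin (n - m + 1) → V4) → V4) (g : (Fin m → V4) → V4)
    (σ : Equiv.Perm (Fin n)),
    IsNQuasigroup h ∧ IsNQuasigroup g ∧
    ∀ x : Fin n → V4,
      f x = h (Fin.cons (g fun j => x (σ ⟨j.1, j.2.trans hm⟩))
        (fun j : Fin (n - m) => x (σ ⟨m + j.1, by have := j.2; omega⟩)))

/-!
Identify each alphabet with the Klein group `ZMod 2 × ZMod 2` so that the linear double-code of the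
layer is the sum of the first coordinates. Then `q (x, ω) = quad φ x + s x ω`, where `φ` is a
Boolean function of the first coordinates of `x` and the *state* `s x` is a permutation of the
alphabet fixing `0`. The translations `move φ i u`, which add `u` to `quad φ`, permute the words,
and `q` is a quasigroup exactly when states along them are compatible. The six states make
this a finite condition on each line: `s` has a period there.

Let `I` be the set of directions in which some flip `move φ i (0, 1)` changes the state.
* If `I` is empty, all states agree at `(0, 1)` and `q` is semilinear.
* If `I` consists of all directions, then all lines share a period `(1, e)`. If moreover all
  `D_i D_j φ` vanish, then `φ` is affine and `q` is semilinear. If `D_i D_j φ ≠ 0`, commuting the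
  moves by `(1, e)` shows that flips in the directions `i` and `j` have the same effect on `s`; the
  directions with the same effect as `i` then form a block through which `q` factors.
* Otherwise, moving in a direction outside `I` shears the state by an amount that is the same for
  all directions of `I`, and `I` together with the last coordinate is a block.
-/

open Function

section Latin

variable {κ A B A' B' : Type*}

/-- The function obtained from `f` by relabelling the values of each argument and of the result. -/
def isotope (E : κ → A ≃ A') (F : B ≃ B') (f : (κ → A) → B) : (κ → A') → B' :=
  fun y => F (f fun i => (E i).symm (y i))

variable {f : (κ → A) → B} {E : κ → A ≃ A'} {F : B ≃ B'}

theorem isotope_apply (x : κ → A) : isotope E F f (fun i => E i (x i)) = F (f x) := by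
  simp [isotope]

variable [DecidableEq κ]

/-- Injectivity in every argument, which for functions `Aⁿ → A` with `A` finite characterizes
`n`-quasigroups. -/
def IsLatin (f : (κ → A) → B) : Prop :=
  ∀ x i, Injective fun a => f (update x i a)

/-- The classes of `f` in the coordinates from `C`, read off for one fixed choice `z₀` of the
other coordinates, are the same for all choices: `f` factors through a function of the
coordinates from `C`. -/
def IsBlock (C : Finset κ) (f : (κ → A) → B) : Prop :=
  ∃ z₀, ∀ u w, f (C.piecewise u z₀) = f (C.piecewise w z₀) →
    ∀ z, f (C.piecewise u z) = f (C.piecewise w z)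

theorem IsLatin.isotope (hf : IsLatin f) : IsLatin (isotope E F f) := by
  intro y i a b hab
  have hupdate : ∀ a, (fun k => (E k).symm (update y i a k)) =
      update (fun k => (E k).symm (y k)) i ((E i).symm a) := fun a =>
    funext fun k => apply_update (fun k => (E k).symm) y i a k
  have h := F.injective hab
  simp only [hupdate] at h
  exact (E i).symm.injective (hf _ i h)

theorem IsLatin.comp_equiv {κ' : Type*} [DecidableEq κ'] (hf : IsLatin f) (e : κ ≃ κ') :
    IsLatin fun y : κ' → A => f (y ∘ e) := by
  intro y i
  simp only [update_comp_equiv]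
  exact hf _ _

theorem IsBlock.of_isotope {C : Finset κ} (h : IsBlock C (isotope E F f)) : IsBlock C f := by
  obtain ⟨y₀, h⟩ := h
  have hpiecewise : ∀ u z, isotope E F f (C.piecewise (fun i => E i (u i)) fun i => E i (z i)) =
      F (f (C.piecewise u z)) := fun u z => by
    rw [← isotope_apply]
    congr 1
    ext i
    by_cases hi : i ∈ C <;> simp [hi]
  refine ⟨fun i => (E i).symm (y₀ i), fun u w huw z => F.injective ?_⟩
  rw [← hpiecewise, ← hpiecewise]
  refine h _ _ ?_ _
  simpa only [← hpiecewise, Equiv.apply_symm_apply] using congrArg F huw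

end Latin

section ParityCheck

variable {κ A B A' B' : Type*} [Fintype κ] [Fintype A] [Fintype B] [Fintype A'] [Fintype B']

/-- The Boolean function `ℓ` is the indicator of a two-element set. -/
def IsBalanced (ℓ : A → ZMod 2) : Prop := (Finset.univ.filter fun a => ℓ a = 1).card = 2

/-- Some Boolean function of the value of `f` is a sum of Boolean functions of the arguments, all
of them indicators of two-element sets; over `{0, 1, 2, 3}` this is semilinearity. -/
def HasParityCheck (f : (κ → A) → B) : Prop :=
  ∃ (μ : B → ZMod 2) (ℓ : κ → A → ZMod 2), IsBalanced μ ∧ (∀ i, IsBalanced (ℓ i)) ∧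
    ∀ x, μ (f x) = ∑ i, ℓ i (x i)

theorem IsBalanced.comp_equiv {ℓ : A' → ZMod 2} (h : IsBalanced ℓ) (e : A ≃ A') :
    IsBalanced fun a => ℓ (e a) :=
  (Finset.card_equiv e fun a => by simp).trans h

theorem HasParityCheck.of_isotope {f : (κ → A) → B} {E : κ → A ≃ A'} {F : B ≃ B'}
    (h : HasParityCheck (isotope E F f)) : HasParityCheck f := by
  obtain ⟨μ, ℓ, hμ, hℓ, h⟩ := h
  exact ⟨fun b => μ (F b), fun i a => ℓ i (E i a), hμ.comp_equiv F,
    fun i => (hℓ i).comp_equiv (E i), fun x => by rw [← h, isotope_apply]⟩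

theorem ite_eq_one_eq_self : ∀ c : ZMod 2, (if c = 1 then 1 else 0) = c := by decide

theorem HasParityCheck.isSemilinear {n : ℕ} {f : (Fin n → V4) → V4} (h : HasParityCheck f) :
    IsSemilinear f := by
  obtain ⟨μ, ℓ, hμ, hℓ, h⟩ := h
  obtain ⟨a, b, hab, hμab⟩ := Finset.card_eq_two.1 hμ
  refine ⟨a, b, hab, fun i => Finset.univ.filter fun v => ℓ i v = 1, hℓ, fun x => ?_⟩
  have hmem : x ∈ SCode f a b ↔ f x ∈ Finset.univ.filter fun v => μ v = 1 := by
    simp [hμab, SCode]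
  simp only [hmem, Finset.mem_filter, Finset.mem_univ, true_and, ite_eq_one_eq_self, h]

end ParityCheck

section Decomposition

theorem isNQuasigroup_iff_isLatin {n : ℕ} {f : (Fin n → V4) → V4} :
    IsNQuasigroup f ↔ IsLatin f := by
  simp only [IsNQuasigroup, IsLatin, ← bijective_iff_existsUnique, ← Finite.injective_iff_bijective]

theorem IsLatin.exists_factorization {A : Type*} [Finite A] {m k : ℕ}
    {f : (Fin m ⊕ Fin k → A) → A} (hf : IsLatin f) (i : Fin m) (u₀ : Fin m → A) (w₀ : Fin k → A)
    (hblock : ∀ u u', f (Sum.elim u w₀) = f (Sum.elim u' w₀) →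
      ∀ w, f (Sum.elim u w) = f (Sum.elim u' w)) :
    ∃ (h : (Fin (k + 1) → A) → A) (g : (Fin m → A) → A), IsLatin h ∧ IsLatin g ∧
      ∀ u w, f (Sum.elim u w) = h (Fin.cons (g u) w) := by
  have hinl : ∀ w, IsLatin fun u => f (Sum.elim u w) := fun w u i => by
    simp only [← Sum.update_elim_inl]
    exact hf _ _
  have hinr : ∀ u, IsLatin fun w => f (Sum.elim u w) := fun u w i => by
    simp only [← Sum.update_elim_inr]
    exact hf _ _
  obtain ⟨c, hc⟩ := (Finite.surjective_of_injective (hinl w₀ u₀ i)).hasRightInverse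
  refine ⟨fun v => f (Sum.elim (update u₀ i (c (v 0))) (Fin.tail v)), fun u => f (Sum.elim u w₀),
    fun v j => ?_, hinl w₀, fun u w => (hblock _ _ (hc _) w).symm⟩
  cases j using Fin.cases with
  | zero =>
    simp only [update_self, Fin.tail_update_zero]
    exact (hinl (Fin.tail v) u₀ i).comp hc.injective
  | succ j =>
    simp only [update_of_ne (Fin.succ_ne_zero j).symm, Fin.tail_update_succ]
    exact hinr _ (Fin.tail v) j

theorem exists_equiv_piecewise_eq {N : ℕ} {A : Type*} (C : Finset (Fin N)) :
    ∃ e : Fin C.card ⊕ Fin (N - C.card) ≃ Fin N, ∀ u z : Fin N → A, C.piecewise u z =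
      Sum.elim (fun j => u (e (Sum.inl j))) (fun j => z (e (Sum.inr j))) ∘ e.symm := by
  let e : Fin C.card ⊕ Fin (N - C.card) ≃ Fin N :=
    finSumEquivOfFinset rfl (by rw [Finset.card_compl, Fintype.card_fin])
  have hinl : ∀ j, e (Sum.inl j) ∈ C := fun j => by
    simp only [e, finSumEquivOfFinset_inl, Finset.orderEmbOfFin_mem]
  have hinr : ∀ j, e (Sum.inr j) ∉ C := fun j => by
    rw [← Finset.mem_compl]
    simp only [e, finSumEquivOfFinset_inr, Finset.orderEmbOfFin_mem]
  refine ⟨e, fun u z => ?_⟩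
  rw [Equiv.eq_comp_symm]
  ext (j | j) <;> simp [hinl, hinr]

theorem IsBlock.isDecomposable {N : ℕ} {f : (Fin N → V4) → V4} {C : Finset (Fin N)}
    (hblock : IsBlock C f) (hf : IsLatin f) (hC : 2 ≤ C.card) (hCN : C.card < N) :
    IsDecomposable f := by
  obtain ⟨e, hglue⟩ := exists_equiv_piecewise_eq (A := V4) C
  obtain ⟨z₀, hz₀⟩ := hblock
  obtain ⟨h, g, hh, hg, hfac⟩ := (hf.comp_equiv e.symm).exists_factorization ⟨0, by omega⟩ 0
    (fun j => z₀ (e (Sum.inr j))) fun u u' huu' w => by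
      simpa [hglue] using hz₀ (Sum.elim u w ∘ e.symm) (Sum.elim u' w ∘ e.symm)
        (by simpa [hglue] using huu') (Sum.elim u w ∘ e.symm)
  let position : Fin C.card ⊕ Fin (N - C.card) ≃ Fin N :=
    finSumFinEquiv.trans (finCongr (Nat.add_sub_of_le hCN.le))
  have hposl : ∀ j, position.symm ⟨j.1, j.2.trans hCN⟩ = Sum.inl j := fun j =>
    position.symm_apply_eq.2 rfl
  have hposr : ∀ j, position.symm ⟨C.card + j.1, by omega⟩ = Sum.inr j := fun j =>
    position.symm_apply_eq.2 rfl
  refine ⟨C.card, hC, hCN, h, g, position.symm.trans e, isNQuasigroup_iff_isLatin.2 hh,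
    isNQuasigroup_iff_isLatin.2 hg, fun x => ?_⟩
  have hx := hfac (fun j => x (e (Sum.inl j))) fun j => x (e (Sum.inr j))
  rw [← hglue, Finset.piecewise_same] at hx
  simp only [hx, Equiv.trans_apply, hposl, hposr]

end Decomposition

/-- The Klein four-group, the alphabet `Σ` in coordinates adapted to the linear double-codes. -/
abbrev Klein := ZMod 2 × ZMod 2

/-- A permutation of the Klein group fixing `0`, recorded by its values at `(1, 0)` and `(0, 1)`;
every such permutation is linear. -/
def State := {p : Klein × Klein // p.1 ≠ 0 ∧ p.2 ≠ 0 ∧ p.1 ≠ p.2}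

namespace State

instance : DecidableEq State := inferInstanceAs (DecidableEq (Subtype _))

instance : Fintype State :=
  inferInstanceAs (Fintype {p : Klein × Klein // p.1 ≠ 0 ∧ p.2 ≠ 0 ∧ p.1 ≠ p.2})

instance : CoeFun State fun _ => Klein → Klein :=
  ⟨fun s w => (w.1 * s.1.1.1 + w.2 * s.1.2.1, w.1 * s.1.1.2 + w.2 * s.1.2.2)⟩

theorem apply_zero (s : State) : s 0 = 0 := by simp [Prod.ext_iff]

theorem exists_eq_of_injective {f : Klein → Klein} (hf : Function.Injective f) (h0 : f 0 = 0) :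
    ∃ s : State, ∀ w, f w = s w := by
  have hne : ∀ {v w}, v ≠ w → f v ≠ f w := hf.ne
  have h10 : f (1, 0) ≠ 0 := h0 ▸ hne (by decide)
  have h01 : f (0, 1) ≠ 0 := h0 ▸ hne (by decide)
  have h11 : f (1, 1) ≠ 0 := h0 ▸ hne (by decide)
  have sum_of_ne : ∀ {a b c : Klein}, a ≠ 0 → b ≠ 0 → c ≠ 0 → a ≠ b → c ≠ a → c ≠ b →
      c = a + b := by decide
  have hsum : f (1, 1) = f (1, 0) + f (0, 1) :=
    sum_of_ne h10 h01 h11 (hne (by decide)) (hne (by decide)) (hne (by decide))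
  refine ⟨⟨(f (1, 0), f (0, 1)), h10, h01, hne (by decide)⟩, fun w => ?_⟩
  obtain rfl | rfl | rfl | rfl : w = 0 ∨ w = (1, 0) ∨ w = (0, 1) ∨ w = (1, 1) := by
    revert w; decide
  · simp [h0, Prod.ext_iff]
  · simp
  · simp
  · simp [hsum, Prod.ext_iff]

/-- `Compat u s t` says that the permutations `s + u` and `t` of the alphabet disagree everywhere:
the condition on two rows of a Latin square whose values at `0` differ by `u`. -/
def Compat (u : Klein) (s t : State) : Prop := ∀ w, s w + u ≠ t w

/-- `s` and `t` take the value `d` at the same place. -/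
def Agree (d : Klein) (s t : State) : Prop := ∀ w, s w = d ↔ t w = d

/-- `t` is `s` followed by the linear map `(a, b) ↦ (a, b + c * a)`. -/
def Shear (c : ZMod 2) (s t : State) : Prop := ∀ w, t w = s w + (0, c * (s w).1)

instance (u s t) : Decidable (Compat u s t) := inferInstanceAs (Decidable (∀ _, _))
instance (d s t) : Decidable (Agree d s t) := inferInstanceAs (Decidable (∀ _, _))
instance (c s t) : Decidable (Shear c s t) := inferInstanceAs (Decidable (∀ _, _))

theorem Agree.refl (d : Klein) (s : State) : Agree d s s := fun _ => Iff.rfl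

theorem Agree.symm {d : Klein} {s t : State} (h : Agree d s t) : Agree d t s :=
  fun w => (h w).symm

theorem Agree.trans {d : Klein} {r s t : State} (h : Agree d r s) (h' : Agree d s t) :
    Agree d r t := fun w => (h w).trans (h' w)

theorem Agree.eq : ∀ {c d : Klein}, c ≠ 0 → d ≠ 0 → c ≠ d → ∀ {s t : State},
    Agree c s t → Agree d s t → s = t := by
  decide +kernel

theorem Agree.eq_of_compat : ∀ {d : Klein} {s t : State}, d ≠ 0 → Agree d s t → Compat d s t →
    s = t := by
  decide +kernel

theorem Agree.ne_of_compat : ∀ {u : Klein} {s t : State}, u ≠ 0 → Agree u s t → s ≠ t →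
    ∀ {s' : State}, Compat u s s' → ∀ {t' : State}, Compat u t t' → s' ≠ t' := by
  decide +kernel

theorem Compat.agree : ∀ {d u : Klein} {s t : State}, d ≠ 0 → u ≠ 0 → u ≠ d →
    Compat u s t → Compat (u + d) s t → Agree d s t := by
  decide +kernel

theorem exists_eq_of_compat : ∀ {r s : State}, Compat (0, 1) r s →
    ∀ {t : State}, Compat (1, 0) r t → Compat (1, 1) s t →
    ∀ {p : State}, Compat (1, 1) r p → Compat (1, 0) s p → Compat (0, 1) t p →
    s = r ∨ t = r ∨ p = r := by
  decide +kernel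

/-- The pairs `s, t` and `s', t'` are opposite sides of a square: in a system without vertical
lines, parallel lines have the same slope. -/
theorem slope_eq_of_agree_of_compat : ∀ {e e' : ZMod 2} {s t : State}, s ≠ t → Agree (1, e) s t →
    ∀ {s' : State}, Compat (1, e) s s' → ∀ {t' : State}, Compat (1, e) t t' →
    Agree (1, e') s' t' → (Agree (0, 1) s s' → s' = s) → (Agree (0, 1) t t' → t' = t) →
    e' = e := by
  decide +kernel

/-- Two lines through the state `r`, of slopes `0` and `1`, do not fit into a system without
vertical lines. -/
theorem not_compat_of_agree_of_agree : ∀ {r s t : State}, s ≠ r → Agree (1, 0) r s → t ≠ r →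
    Agree (1, 1) r t → ∀ {p : State}, Compat (0, 1) s p → (Agree (0, 1) t p → p = t) →
    ¬ Compat (1, 1) t p := by
  decide +kernel

theorem Shear.unique : ∀ {c c' : ZMod 2} {s t : State}, Shear c s t → Shear c' s t → c = c' := by
  decide +kernel

theorem Shear.of_compat : ∀ {c : ZMod 2} {s t : State}, Compat (0, 1) s t →
    ∀ {s' : State}, Shear c s s' → ∀ {t' : State}, Compat (0, 1) s' t' → Agree (0, 1) t t' →
    Shear c t t' := by
  decide +kernel

/-- The states `s, t, s', t'` form a square, and `r` is the state reached by composing two moves in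
the other order, with commutator `D`. -/
theorem shear_of_square : ∀ {e D : ZMod 2} {s t : State}, s ≠ t → Agree (1, e) s t →
    ∀ {s' : State}, Agree (0, 1) s s' → ∀ {t' : State}, Agree (0, 1) t t' →
    Compat (0, 1) s' t' → ∀ {r : State}, Agree (0, 1) (if D = 0 then s else t) r →
    Compat (1, e) s' r → Compat (1, e + 1) t' r → Shear D s s' := by
  decide +kernel

/-- Four states indexed by the Klein group that fit into one Latin square: the states that a
compatible system takes on a line. -/
def IsLine (a : Klein → State) : Prop := ∀ u v, u ≠ v → Compat (u + v) (a u) (a v)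

namespace IsLine

variable {a : Klein → State} {d : Klein}

theorem exists_period (ha : IsLine a) : ∃ d ≠ 0, a d = a 0 := by
  obtain h | h | h := exists_eq_of_compat (ha 0 (0, 1) (by decide))
    (ha 0 (1, 0) (by decide)) (ha (0, 1) (1, 0) (by decide)) (ha 0 (1, 1) (by decide))
    (ha (0, 1) (1, 1) (by decide)) (ha (1, 0) (1, 1) (by decide))
  exacts [⟨_, by decide, h⟩, ⟨_, by decide, h⟩, ⟨_, by decide, h⟩]

theorem agree_of_period (ha : IsLine a) (hd : d ≠ 0) (had : a d = a 0) (u : Klein) :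
    Agree d (a 0) (a u) := by
  by_cases hu0 : u = 0
  · exact hu0 ▸ Agree.refl d _
  by_cases hud : u = d
  · rw [hud, had]
    exact Agree.refl d _
  · have h0 := ha 0 u (Ne.symm hu0)
    have hd' := ha d u (Ne.symm hud)
    rw [zero_add] at h0
    rw [had, add_comm] at hd'
    exact Compat.agree hd hu0 hud h0 hd'

theorem add_period (ha : IsLine a) (hd : d ≠ 0) (had : a d = a 0) (u : Klein) :
    a (u + d) = a u := by
  have hagree : Agree d (a u) (a (u + d)) :=
    (ha.agree_of_period hd had u).symm.trans (ha.agree_of_period hd had (u + d))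
  have hcompat := ha u (u + d) (by simpa using hd)
  rw [← add_assoc, CharTwo.add_self_eq_zero, zero_add] at hcompat
  exact (hagree.eq_of_compat hd hcompat).symm

end IsLine

end State

open State

section Update

variable {ι : Type*} [DecidableEq ι] {A : Type*}

theorem of_forall_update (C : Finset ι) {P : (ι → A) → Prop}
    (hP : ∀ x, ∀ i ∈ C, ∀ a, P x → P (update x i a)) {x y : ι → A} (hxy : ∀ i ∉ C, x i = y i)
    (hx : P x) : P y := by
  have hpiecewise : ∀ D ⊆ C, P (D.piecewise y x) := by
    intro D hD
    induction D using Finset.induction_on with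
    | empty => simpa using hx
    | insert i D _ ih =>
      rw [Finset.insert_subset_iff] at hD
      rw [Finset.piecewise_insert]
      exact hP _ i hD.1 _ (ih hD.2)
  have hy : C.piecewise y x = y :=
    funext fun i => by by_cases hi : i ∈ C <;> simp [hi, hxy]
  exact hy ▸ hpiecewise C subset_rfl

theorem of_forall_update_of_finite [Finite ι] {P : (ι → A) → Prop}
    (hP : ∀ x i a, P x → P (update x i a)) {x : ι → A} (hx : P x) (y : ι → A) : P y := by
  cases nonempty_fintype ι
  exact of_forall_update Finset.univ (fun x i _ => hP x i) (by simp) hx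

theorem piecewise_rel_of_forall_update [Finite ι] (C : Finset ι) {R : (ι → A) → (ι → A) → Prop}
    (hR : ∀ x y, (∀ i ∉ C, x i = y i) → ∀ j ∉ C, ∀ a, R x y → R (update x j a) (update y j a))
    {u w z₀ : ι → A} (h₀ : R (C.piecewise u z₀) (C.piecewise w z₀)) (z : ι → A) :
    R (C.piecewise u z) (C.piecewise w z) := by
  refine of_forall_update_of_finite (P := fun z => R (C.piecewise u z) (C.piecewise w z))
    (fun z j a h => ?_) h₀ z
  by_cases hj : j ∈ C
  · have hC : ∀ t : ι → A, C.piecewise t (update z j a) = C.piecewise t z := fun t =>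
      C.piecewise_congr (fun _ _ => rfl) fun k hk =>
        update_of_ne (ne_of_mem_of_not_mem hj hk).symm ..
    rwa [hC, hC]
  · rw [← Finset.update_piecewise_of_notMem _ _ _ hj, ← Finset.update_piecewise_of_notMem _ _ _ hj]
    exact hR _ _ (fun i hi => by simp [hi]) j hj a h

theorem sum_comp_update {M : Type*} [AddCommGroup M] [Fintype ι] (f : A → M) (x : ι → A) (i : ι)
    (a : A) : ∑ j, f (update x i a j) = ∑ j, f (x j) + (f a - f (x i)) := by
  rw [← sub_eq_iff_eq_add', ← Finset.sum_sub_distrib, Finset.sum_eq_single i]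
  · rw [update_self]
  · intro j _ hj
    rw [update_of_ne hj, sub_self]
  · exact fun hi => absurd (Finset.mem_univ i) hi

theorem update_eq_self_or_add_single (v : ι → ZMod 2) (i : ι) (a : ZMod 2) :
    update v i a = v ∨ update v i a = v + Pi.single i 1 := by
  obtain rfl | ha : a = v i ∨ a = v i + 1 := by generalize v i = b; revert a b; decide
  · exact Or.inl (update_eq_self i v)
  · right
    ext k
    obtain rfl | hk := eq_or_ne k i <;> simp [*]

theorem of_forall_add_single (C : Finset ι) {P : (ι → ZMod 2) → Prop}
    (hP : ∀ v, ∀ i ∈ C, P v → P (v + Pi.single i 1)) {v w : ι → ZMod 2} (hvw : ∀ i ∉ C, v i = w i)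
    (hv : P v) : P w := by
  refine of_forall_update C (fun v i hi a h => ?_) hvw hv
  obtain h' | h' := update_eq_self_or_add_single v i a
  · rwa [h']
  · rw [h']
    exact hP v i hi h

theorem of_forall_add_single_of_finite [Finite ι] {P : (ι → ZMod 2) → Prop}
    (hP : ∀ v i, P v → P (v + Pi.single i 1)) {v : ι → ZMod 2} (hv : P v) (w : ι → ZMod 2) :
    P w := by
  cases nonempty_fintype ι
  exact of_forall_add_single Finset.univ (fun v i _ => hP v i) (by simp) hv

end Update

section Difference

variable {ι : Type*} [DecidableEq ι]

/-- The derivative `D_i φ` of a Boolean function `φ` in the `i`-th direction. -/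
def diff (φ : (ι → ZMod 2) → ZMod 2) (i : ι) (v : ι → ZMod 2) : ZMod 2 :=
  φ (v + Pi.single i 1) + φ v

variable (φ : (ι → ZMod 2) → ZMod 2)

theorem apply_add_single (i : ι) (v : ι → ZMod 2) (c : ZMod 2) :
    φ (v + Pi.single i c) = φ v + c * diff φ i v := by
  obtain rfl | rfl : c = 0 ∨ c = 1 := by revert c; decide
  · simp
  · rw [diff, one_mul, add_left_comm, CharTwo.add_self_eq_zero, add_zero]

theorem diff_diff_comm (i j : ι) (v : ι → ZMod 2) : diff (diff φ i) j v = diff (diff φ j) i v := by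
  simp only [diff, add_right_comm v (Pi.single i 1)]
  ring

theorem diff_diff_self (i : ι) (v : ι → ZMod 2) : diff (diff φ i) i v = 0 := by
  have hv : v + Pi.single i 1 + Pi.single i 1 = v := by
    rw [add_assoc, ← Pi.single_add, CharTwo.add_self_eq_zero, Pi.single_zero, add_zero]
  simp only [diff, hv, add_comm (φ v), CharTwo.add_self_eq_zero]

theorem eq_add_sum_of_diff_diff_eq_zero [Fintype ι] (hφ : ∀ i j v, diff (diff φ i) j v = 0)
    (v : ι → ZMod 2) : φ v = φ 0 + ∑ i, v i * diff φ i 0 := by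
  have hdiff : ∀ i v, diff φ i v = diff φ i 0 := fun i =>
    of_forall_add_single_of_finite (P := fun v => diff φ i v = diff φ i 0)
      (fun v j h => by rw [apply_add_single (diff φ i), hφ, mul_zero, add_zero, h]) rfl
  refine of_forall_add_single_of_finite (P := fun v => φ v = φ 0 + ∑ i, v i * diff φ i 0)
    (fun v j h => ?_) (v := 0) (by simp) v
  simp [apply_add_single, hdiff j v, h, add_mul, Finset.sum_add_distrib, Pi.single_apply, add_assoc]

end Difference

section Move

variable {ι : Type*}

/-- The first coordinates of a word over the Klein group. -/
def proj (x : ι → Klein) : ι → ZMod 2 := fun i => (x i).1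

variable [DecidableEq ι] {φ : (ι → ZMod 2) → ZMod 2}

/-- The translation by `u` of the `i`-th coordinate, twisted so that it adds `u` to `quad φ`. -/
def move (φ : (ι → ZMod 2) → ZMod 2) (i : ι) (u : Klein) (x : ι → Klein) : ι → Klein :=
  update x i (x i + (u.1, u.2 + u.1 * diff φ i (proj x)))

theorem move_zero (i : ι) (x : ι → Klein) : move φ i 0 x = x := by
  simp [move, ← Prod.zero_eq_mk]

theorem proj_move (i : ι) (u : Klein) (x : ι → Klein) :
    proj (move φ i u x) = proj x + Pi.single i u.1 := by
  ext k
  obtain rfl | hk := eq_or_ne k i <;> simp [proj, move, *]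

theorem diff_move (i j : ι) (u : Klein) (x : ι → Klein) :
    diff φ i (proj (move φ j u x)) = diff φ i (proj x) + u.1 * diff (diff φ i) j (proj x) := by
  rw [proj_move, apply_add_single (diff φ i)]

theorem move_move_self (i : ι) (u v : Klein) (x : ι → Klein) :
    move φ i u (move φ i v x) = move φ i (u + v) x := by
  rw [move, diff_move, diff_diff_self, mul_zero, add_zero]
  simp only [move, update_self, update_idem]
  congr 1
  ext <;> simp only [Prod.fst_add, Prod.snd_add] <;> ring

theorem move_apply_self (i : ι) (u : Klein) (x : ι → Klein) :
    move φ i u x i = x i + (u.1, u.2 + u.1 * diff φ i (proj x)) := update_self ..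

theorem move_apply_of_ne {i k : ι} (hk : k ≠ i) (u : Klein) (x : ι → Klein) :
    move φ i u x k = x k := update_of_ne hk ..

theorem move_move_comm (i j : ι) (u v : Klein) (x : ι → Klein) :
    move φ i u (move φ j v x) =
      move φ j (v + (0, u.1 * v.1 * diff (diff φ i) j (proj x)))
        (move φ i (u + (0, u.1 * v.1 * diff (diff φ i) j (proj x))) x) := by
  obtain rfl | hij := eq_or_ne i j
  · rw [move_move_self, move_move_self, diff_diff_self, mul_zero, ← Prod.zero_eq_mk, add_zero,
      add_zero, add_comm]
  ext k : 1
  obtain rfl | hki := eq_or_ne k i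
  · rw [move_apply_self, move_apply_of_ne hij, move_apply_of_ne hij, move_apply_self, diff_move]
    ext <;> simp only [Prod.fst_add, Prod.snd_add] <;> ring
  obtain rfl | hkj := eq_or_ne k j
  · rw [move_apply_of_ne hki, move_apply_self, move_apply_self, move_apply_of_ne hki, diff_move,
      diff_diff_comm φ k i]
    ext <;> simp only [Prod.fst_add, Prod.snd_add] <;> grind
  · simp only [move_apply_of_ne hki, move_apply_of_ne hkj]

theorem move_flip_comm (i j : ι) (u : Klein) (x : ι → Klein) :
    move φ i u (move φ j (0, 1) x) = move φ j (0, 1) (move φ i u x) := by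
  simp [move_move_comm i j u (0, 1), ← Prod.zero_eq_mk]

theorem move_flip_self (i : ι) (x : ι → Klein) :
    move φ i (0, 1) (move φ i (0, 1) x) = x := by
  rw [move_move_self, CharTwo.add_self_eq_zero, move_zero]

theorem move_add_snd (l : ι) (e : ZMod 2) (x : ι → Klein) (t : ι → ZMod 2) :
    move φ l (1, e) (fun k => x k + (0, t k)) =
      fun k => move φ l (1, e + 1) x k + (0, (t + Pi.single l 1 : ι → ZMod 2) k) := by
  have hproj : proj (fun k => x k + (0, t k)) = proj x := by ext; simp [proj]
  ext k : 1
  obtain rfl | hk := eq_or_ne k l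
  · rw [move_apply_self, move_apply_self, hproj]
    ext <;> simp only [Prod.fst_add, Prod.snd_add, Pi.add_apply, Pi.single_eq_same] <;> grind
  · simp [move_apply_of_ne hk, hk]

theorem update_eq_move (i : ι) (a : Klein) (x : ι → Klein) :
    update x i a =
      move φ i ((a - x i).1, (a - x i).2 - (a - x i).1 * diff φ i (proj x)) x := by
  rw [move]
  congr 1
  ext <;> simp

theorem IsLatin.apply_move_ne {B : Type*} {f : (ι → Klein) → B} (hf : IsLatin f)
    {x : ι → Klein} {i : ι} {u : Klein} (hu : u ≠ 0) : f (move φ i u x) ≠ f x := by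
  intro h
  have eq_zero : ∀ (a u : Klein) (c : ZMod 2), a + (u.1, u.2 + u.1 * c) = a → u = 0 := by decide
  exact hu (eq_zero (x i) u (diff φ i (proj x))
    (hf x i (by simpa only [move, update_eq_self] using h)))

theorem of_forall_move [Finite ι] {P : (ι → Klein) → Prop}
    (hP : ∀ x i u, P x → P (move φ i u x)) {x : ι → Klein} (hx : P x) (y : ι → Klein) : P y :=
  of_forall_update_of_finite
    (fun x i a h => (update_eq_move (φ := φ) i a x).symm ▸ hP x i _ h) hx y

theorem of_forall_flip [Finite ι] {P : (ι → Klein) → Prop}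
    (hP : ∀ x i, P x → P (move φ i (0, 1) x)) {x y : ι → Klein} (hxy : proj x = proj y)
    (hx : P x) : P y := by
  have hy := of_forall_add_single_of_finite (P := fun t => P fun i => ((x i).1, t i))
    (fun t i h => ?_) (v := fun i => (x i).2) hx fun i => (y i).2
  · simpa [show ∀ i, (x i).1 = (y i).1 from congrFun hxy] using hy
  · convert hP _ i h using 1
    ext k : 1
    obtain rfl | hk := eq_or_ne k i <;> simp [move, *]

end Move

section Compatible

variable {ι : Type*} [DecidableEq ι]

/-- A system of states `s` on the words over the Klein group is compatible with `φ` if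
`(x, ω) ↦ quad φ x + s x ω` is a quasigroup in the coordinates of `x`. -/
def IsCompatible (φ : (ι → ZMod 2) → ZMod 2) (s : (ι → Klein) → State) : Prop :=
  ∀ x i u, u ≠ 0 → Compat u (s x) (s (move φ i u x))

/-- No two distinct states of `s` on a common line agree at `(0, 1)`. -/
def NoVertical (φ : (ι → ZMod 2) → ZMod 2) (s : (ι → Klein) → State) : Prop :=
  ∀ x i u, Agree (0, 1) (s x) (s (move φ i u x)) → s (move φ i u x) = s x

/-- On the line in direction `i` through `x`, the only period of `s` is `(1, e)`. -/
def Tilted (φ : (ι → ZMod 2) → ZMod 2) (s : (ι → Klein) → State) (i : ι) (e : ZMod 2)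
    (x : ι → Klein) : Prop :=
  s (move φ i (0, 1) x) ≠ s x ∧ s (move φ i (1, e) x) = s x

end Compatible

namespace IsCompatible

variable {ι : Type*} [DecidableEq ι] {φ : (ι → ZMod 2) → ZMod 2} {s : (ι → Klein) → State}

theorem isLine (hs : IsCompatible φ s) (x : ι → Klein) (i : ι) :
    IsLine fun u => s (move φ i u x) := by
  intro u v huv
  have huv' : u + v ≠ 0 := by rwa [← CharTwo.sub_eq_add, sub_ne_zero]
  have h := hs (move φ i u x) i (u + v) huv'
  rwa [move_move_self, add_right_comm, CharTwo.add_self_eq_zero, zero_add] at h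

theorem exists_period (hs : IsCompatible φ s) (x : ι → Klein) (i : ι) :
    ∃ d ≠ 0, s (move φ i d x) = s x := by
  simpa only [move_zero] using (hs.isLine x i).exists_period

theorem agree_of_period (hs : IsCompatible φ s) {x : ι → Klein} {i : ι} {d : Klein} (hd : d ≠ 0)
    (h : s (move φ i d x) = s x) (u : Klein) : Agree d (s x) (s (move φ i u x)) := by
  simpa only [move_zero] using
    (hs.isLine x i).agree_of_period hd (by simpa only [move_zero] using h) u

theorem move_add_period (hs : IsCompatible φ s) {x : ι → Klein} {i : ι} {d : Klein} (hd : d ≠ 0)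
    (h : s (move φ i d x) = s x) (u : Klein) : s (move φ i (u + d) x) = s (move φ i u x) :=
  (hs.isLine x i).add_period hd (by simpa only [move_zero] using h) u

theorem exists_tilted_period (hs : IsCompatible φ s) {x : ι → Klein} {i : ι}
    (hx : s (move φ i (0, 1) x) ≠ s x) : ∃ e, s (move φ i (1, e) x) = s x := by
  obtain ⟨⟨a, e⟩, hd, h⟩ := hs.exists_period x i
  have fst_eq_one : ∀ a e : ZMod 2, (a, e) ≠ 0 → (a, e) ≠ (0, 1) → a = 1 := by decide
  obtain rfl := fst_eq_one a e hd fun hae => hx (hae ▸ h)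
  exact ⟨e, h⟩

theorem flip_ne_move (hs : IsCompatible φ s) {x : ι → Klein} {i : ι} {e : ZMod 2}
    (hx : s (move φ i (0, 1) x) ≠ s x) (he : s (move φ i (1, e) x) = s x) (j : ι) :
    s (move φ i (0, 1) (move φ j (1, e) x)) ≠ s (move φ j (1, e) x) := by
  have he0 : ((1, e) : Klein) ≠ 0 := by simp [Prod.ext_iff]
  have h := (hs.agree_of_period he0 he (0, 1)).ne_of_compat he0 hx.symm (hs x j _ he0)
    (hs (move φ i (0, 1) x) j _ he0)
  rw [move_flip_comm] at h
  exact h.symm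

theorem exists_flip_ne [Finite ι] (hs : IsCompatible φ s) {i : ι}
    (hi : ∃ x, s (move φ i (0, 1) x) ≠ s x) (v : ι → ZMod 2) :
    ∃ z, proj z = v ∧ s (move φ i (0, 1) z) ≠ s z := by
  obtain ⟨x, hx⟩ := hi
  refine of_forall_add_single_of_finite
    (P := fun v => ∃ z, proj z = v ∧ s (move φ i (0, 1) z) ≠ s z) (fun v j => ?_) ⟨x, rfl, hx⟩ v
  rintro ⟨z, rfl, hz⟩
  obtain ⟨e, he⟩ := hs.exists_tilted_period hz
  exact ⟨move φ j (1, e) z, proj_move .., hs.flip_ne_move hz he j⟩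

theorem flip_eq_flip (hs : IsCompatible φ s) {x : ι → Klein} {i : ι} {u : Klein}
    (hx : s (move φ i (0, 1) x) = s x) (hu : s (move φ i u x) ≠ s x) (j : ι) :
    s (move φ i (0, 1) (move φ j (0, 1) x)) = s (move φ j (0, 1) x) ∧
      s (move φ i u (move φ j (0, 1) x)) ≠ s (move φ j (0, 1) x) := by
  have h01 : ((0, 1) : Klein) ≠ 0 := by decide
  have hne : ∀ v, s (move φ i v x) ≠ s x →
      s (move φ i v (move φ j (0, 1) x)) ≠ s (move φ j (0, 1) x) := by
    intro v hv
    rw [move_flip_comm]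
    exact ((hs.agree_of_period h01 hx v).ne_of_compat h01 hv.symm (hs x j _ h01)
      (hs (move φ i v x) j _ h01)).symm
  refine ⟨?_, hne u hu⟩
  obtain ⟨d, hd, h⟩ := hs.exists_period (move φ j (0, 1) x) i
  have hdu : d ≠ u := fun hdu => hne u hu (hdu ▸ h)
  have hdu' : d ≠ u + (0, 1) := fun hdu =>
    hne (u + (0, 1)) (by rwa [hs.move_add_period h01 hx]) (hdu ▸ h)
  have hu0 : u ≠ 0 := fun hu0 => hu (by rw [hu0, move_zero])
  have hu1 : u ≠ (0, 1) := fun hu1 => hu (hu1 ▸ hx)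
  have eq_flip : ∀ d u : Klein, d ≠ 0 → d ≠ u → d ≠ u + (0, 1) → u ≠ 0 → u ≠ (0, 1) →
      d = (0, 1) := by decide
  exact eq_flip d u hd hdu hdu' hu0 hu1 ▸ h

theorem noVertical [Finite ι] (hs : IsCompatible φ s)
    (hflip : ∀ i, ∃ x, s (move φ i (0, 1) x) ≠ s x) : NoVertical φ s := by
  intro x i u hagree
  by_contra hu
  obtain ⟨d, hd, hdx⟩ := hs.exists_period x i
  obtain rfl | hd1 := eq_or_ne d (0, 1)
  · obtain ⟨z, hz, hzi⟩ := hs.exists_flip_ne (hflip i) (proj x)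
    exact hzi (of_forall_flip
      (P := fun y => s (move φ i (0, 1) y) = s y ∧ s (move φ i u y) ≠ s y)
      (fun y j h => hs.flip_eq_flip h.1 h.2 j) hz.symm ⟨hdx, hu⟩).1
  · exact hu (Agree.eq hd (by decide) hd1 (hs.agree_of_period hd hdx u) hagree).symm

theorem agree_of_tilted (hs : IsCompatible φ s) {i : ι} {e : ZMod 2} {x : ι → Klein}
    (hx : Tilted φ s i e x) : Agree (1, e) (s x) (s (move φ i (0, 1) x)) :=
  hs.agree_of_period (by simp [Prod.ext_iff]) hx.2 _

theorem tilted_move (hs : IsCompatible φ s) (hv : NoVertical φ s) {i : ι} {e : ZMod 2}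
    {x : ι → Klein} (hx : Tilted φ s i e x) (j : ι) : Tilted φ s i e (move φ j (1, e) x) := by
  have he0 : ((1, e) : Klein) ≠ 0 := by simp [Prod.ext_iff]
  have hne := hs.flip_ne_move hx.1 hx.2 j
  obtain ⟨e', he'⟩ := hs.exists_tilted_period hne
  have hcompat := hs (move φ i (0, 1) x) j _ he0
  have hvert := hv (move φ i (0, 1) x) j (1, e)
  rw [move_flip_comm] at hcompat hvert
  obtain rfl := slope_eq_of_agree_of_compat hx.1.symm (hs.agree_of_tilted hx) (hs x j _ he0)
    hcompat (hs.agree_of_tilted ⟨hne, he'⟩) (hv x j (1, e)) hvert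
  exact ⟨hne, he'⟩

theorem not_tilted_one_of_tilted_zero (hs : IsCompatible φ s) (hv : NoVertical φ s)
    {i j : ι} {x : ι → Klein} (hi : Tilted φ s i 0 x) : ¬ Tilted φ s j 1 x := by
  intro hj
  have hcompat := hs (move φ i ((0, 1) + (1, 0)) x) j (0, 1) (by decide)
  rw [hs.move_add_period (by decide) hi.2, ← move_flip_comm] at hcompat
  exact not_compat_of_agree_of_agree hi.1 (hs.agree_of_tilted hi) hj.1 (hs.agree_of_tilted hj)
    hcompat (hv _ i _) (hs _ i _ (by decide))

theorem tilted_of_not_period (hs : IsCompatible φ s) (hv : NoVertical φ s) {i : ι} {e : ZMod 2}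
    {x : ι → Klein} (he : s (move φ i (1, e) x) ≠ s x) : Tilted φ s i (e + 1) x := by
  have hflip : s (move φ i (0, 1) x) ≠ s x := fun h =>
    he (hv x i _ (hs.agree_of_period (by decide) h _))
  obtain ⟨e', he'⟩ := hs.exists_tilted_period hflip
  obtain rfl | rfl : e' = e ∨ e' = e + 1 := by clear he he'; decide +revert
  · exact absurd he' he
  · exact ⟨hflip, he'⟩

theorem exists_common_period [Finite ι] (hs : IsCompatible φ s) (hv : NoVertical φ s) :
    ∃ e, ∀ x i, s (move φ i (1, e) x) = s x := by
  by_contra! h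
  obtain ⟨x, i, hx⟩ := h 1
  obtain ⟨y, j, hy⟩ := h 0
  replace hx : Tilted φ s i 0 x := hs.tilted_of_not_period hv hx
  replace hy : Tilted φ s j 1 y := by simpa using hs.tilted_of_not_period hv hy
  obtain ⟨z, hz, hzj⟩ : ∃ z, proj z = proj x ∧ Tilted φ s j 1 z :=
    of_forall_add_single_of_finite (P := fun v => ∃ z, proj z = v ∧ Tilted φ s j 1 z)
      (by rintro v l ⟨z, rfl, hz⟩; exact ⟨_, proj_move .., hs.tilted_move hv hz l⟩) ⟨y, rfl, hy⟩ _
  have htranslate : ∀ t : ι → ZMod 2, ∃ x, Tilted φ s i 0 x ∧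
      Tilted φ s j 1 fun k => x k + (0, t k) := by
    refine of_forall_add_single_of_finite (fun t l => ?_) (v := fun k => (z k).2 - (x k).2) ?_
    · rintro ⟨x, hx, hz⟩
      refine ⟨_, hs.tilted_move hv hx l, ?_⟩
      simpa only [move_add_snd, CharTwo.add_self_eq_zero] using hs.tilted_move hv hz l
    · refine ⟨x, hx, ?_⟩
      convert hzj using 2 with k
      ext
      · simpa [proj] using congrFun hz.symm k
      · simp
  obtain ⟨x, hx, hxj⟩ := htranslate 0
  exact hs.not_tilted_one_of_tilted_zero hv hx (by simpa [← Prod.zero_eq_mk] using hxj)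

end IsCompatible

section Pairing

/-- The symplectic form on the Klein group; its kernel in `v` is `{0, d}` when `d ≠ 0`. -/
def pairing (d v : Klein) : ZMod 2 := d.1 * v.2 + d.2 * v.1

theorem pairing_zero (d : Klein) : pairing d 0 = 0 := by simp [pairing]

theorem pairing_add (d u v : Klein) : pairing d (u + v) = pairing d u + pairing d v := by
  simp only [pairing, Prod.fst_add, Prod.snd_add]
  ring

end Pairing

section Quad

variable {ι : Type*} [Fintype ι]

/-- The Klein-valued function that a layer becomes in adapted coordinates: its first component is
the linear double-code, its second component is affine up to the Boolean function `φ`. -/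
def quad (φ : (ι → ZMod 2) → ZMod 2) (x : ι → Klein) : Klein :=
  (∑ i, (x i).1, ∑ i, (x i).2 + φ (proj x))

variable [DecidableEq ι] {φ : (ι → ZMod 2) → ZMod 2}

theorem quad_move (i : ι) (u : Klein) (x : ι → Klein) :
    quad φ (move φ i u x) = quad φ x + u := by
  ext
  · simp [quad, move, sum_comp_update Prod.fst]
  · simp only [quad, proj_move, apply_add_single, Prod.snd_add]
    simp only [move, sum_comp_update Prod.snd, Prod.snd_add]
    grind

end Quad

section FlipsCancel

variable {ι : Type*} [DecidableEq ι] {φ : (ι → ZMod 2) → ZMod 2} {s : (ι → Klein) → State}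
  {e : ZMod 2}

/-- The flips in the directions `i` and `j` have the same effect on the system `s`. -/
def FlipsCancel (φ : (ι → ZMod 2) → ZMod 2) (s : (ι → Klein) → State) (i j : ι) : Prop :=
  ∀ x, s (move φ i (0, 1) (move φ j (0, 1) x)) = s x

theorem FlipsCancel.refl (i : ι) : FlipsCancel φ s i i := fun x => by rw [move_flip_self]

theorem FlipsCancel.trans {i j k : ι} (hij : FlipsCancel φ s i j) (hjk : FlipsCancel φ s j k) :
    FlipsCancel φ s i k := fun x => by
  rw [← hjk x, ← hij (move φ j _ _), move_flip_self]

theorem FlipsCancel.flip_eq_flip {i j : ι} (h : FlipsCancel φ s i j) (x : ι → Klein) :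
    s (move φ i (0, 1) x) = s (move φ j (0, 1) x) := by
  rw [← h, move_flip_comm j i, move_flip_self]

/-- Commuting the moves by `(1, e)` in the directions `i` and `j` costs one flip in each of
them, and the moves themselves do not change `s`. -/
theorem flipsCancel_of_diff_diff_ne_zero [Finite ι] (he : ∀ x i, s (move φ i (1, e) x) = s x)
    {i j : ι} (hij : ∃ v, diff (diff φ i) j v ≠ 0) : FlipsCancel φ s i j := by
  obtain ⟨v, hv⟩ := hij
  replace hv : diff (diff φ i) j v = 1 := Fin.eq_one_of_ne_zero _ hv
  have hflips : ∀ x, proj x = v →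
      s (move φ i (0, 1) (move φ j (0, 1) x)) = s x := by
    intro x hx
    have hcomm := move_move_comm (φ := φ) i j (1, e) (1, e) x
    rw [hx, hv, mul_one, mul_one, ← move_move_self, ← move_move_self, ← move_flip_comm i j] at hcomm
    have h := congrArg s hcomm
    rw [he, he, he, he, move_flip_comm j i] at h
    exact h.symm
  have hall := of_forall_add_single_of_finite
    (P := fun v => ∀ x, proj x = v → s (move φ i (0, 1) (move φ j (0, 1) x)) = s x)
    (fun v l h x hx => ?_) hflips
  · exact fun x => hall _ x rfl
  · have hx' := h (move φ l (1, e) x) (by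
      rw [proj_move, hx, add_assoc, ← Pi.single_add, CharTwo.add_self_eq_zero, Pi.single_zero,
        add_zero])
    rwa [← move_flip_comm l j, ← move_flip_comm l i, he, he] at hx'

theorem apply_move_eq_of_flipsCancel (he : ∀ x i, s (move φ i (1, e) x) = s x) {i j : ι}
    (hij : FlipsCancel φ s i j) (u : Klein) (x : ι → Klein) :
    s (move φ j u x) = s (move φ i (0, pairing (1, e) u) x) := by
  have hflips : ∀ c, s (move φ j (0, c) x) = s (move φ i (0, c) x) := fun c => by
    obtain rfl | rfl : c = 0 ∨ c = 1 := by revert c; decide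
    · simp only [← Prod.zero_eq_mk, move_zero]
    · exact (hij.flip_eq_flip x).symm
  rw [← hflips]
  obtain ⟨a, b⟩ := u
  obtain rfl | rfl : a = 0 ∨ a = 1 := by revert a; decide
  · simp [pairing]
  · rw [← he _ j, move_move_self]
    congr 2
    ext
    · rfl
    · simp [pairing, add_comm]

end FlipsCancel

section ParityBlock

variable {ι : Type*} [Fintype ι] [DecidableEq ι] {φ : (ι → ZMod 2) → ZMod 2}
  {s : (ι → Klein) → State} {e : ZMod 2} {C : Finset ι}

theorem quad_update_eq {j : ι} {x y : ι → Klein}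
    (hC : ∀ i ∈ C, ∀ v, diff (diff φ j) i v = 0) (hj : j ∉ C) (hxy : ∀ i ∉ C, x i = y i)
    (h : quad φ x = quad φ y) (a : Klein) :
    quad φ (update x j a) = quad φ (update y j a) := by
  have hdiff : diff φ j (proj y) = diff φ j (proj x) :=
    of_forall_add_single C (P := fun v => diff φ j v = diff φ j (proj x))
      (fun v i hi hv => by rw [apply_add_single (diff φ j), hC i hi, mul_zero, add_zero, hv])
      (fun i hi => congrArg Prod.fst (hxy i hi)) rfl
  rw [update_eq_move (φ := φ), quad_move, update_eq_move (φ := φ), quad_move, h, hxy j hj, hdiff]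

theorem apply_eq_of_quad_eq (he : ∀ x i, s (move φ i (1, e) x) = s x) {i : ι}
    (hC : ∀ j ∈ C, FlipsCancel φ s i j) {x y : ι → Klein} (hxy : ∀ j ∉ C, x j = y j)
    (h : quad φ x = quad φ y) : s x = s y := by
  have hflip : s (move φ i (0, pairing (1, e) (quad φ x + quad φ y)) y) = s x := by
    refine of_forall_update C
      (P := fun y => s (move φ i (0, pairing (1, e) (quad φ x + quad φ y)) y) = s x)
      (fun y j hj a hy => ?_) hxy ?_
    · obtain ⟨u, hu⟩ : ∃ u, update y j a = move φ j u y := ⟨_, update_eq_move ..⟩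
      have hcomm : ∀ c, move φ i (0, c) (move φ j u y) = move φ j u (move φ i (0, c) y) :=
        fun c => by simp [move_move_comm i j, ← Prod.zero_eq_mk]
      rw [hu, quad_move, hcomm, apply_move_eq_of_flipsCancel he (hC j hj), move_move_self, ← hy,
        ← add_assoc, pairing_add _ _ u, Prod.mk_add_mk, add_zero, add_left_comm,
        CharTwo.add_self_eq_zero, add_zero]
    · rw [CharTwo.add_self_eq_zero, pairing_zero, ← Prod.zero_eq_mk, move_zero]
  rw [← hflip, h, CharTwo.add_self_eq_zero, pairing_zero, ← Prod.zero_eq_mk, move_zero]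

theorem exists_block_of_diff_diff_ne_zero (he : ∀ x i, s (move φ i (1, e) x) = s x)
    (hφ : ∃ i j v, diff (diff φ i) j v ≠ 0) :
    ∃ C : Finset ι, 2 ≤ C.card ∧ ∀ u w z₀ : ι → Klein,
      quad φ (C.piecewise u z₀) = quad φ (C.piecewise w z₀) → ∀ z,
        quad φ (C.piecewise u z) = quad φ (C.piecewise w z) ∧
          s (C.piecewise u z) = s (C.piecewise w z) := by
  classical
  obtain ⟨i, j, v, hv⟩ := hφ
  have hij : i ≠ j := fun hij => hv (hij ▸ diff_diff_self φ i v)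
  let C : Finset ι := {k | FlipsCancel φ s i k}
  have hC : ∀ k, k ∈ C ↔ FlipsCancel φ s i k := by simp [C]
  have hdiff : ∀ k ∉ C, ∀ l ∈ C, ∀ v, diff (diff φ k) l v = 0 := by
    intro k hk l hl v
    by_contra hv
    rw [diff_diff_comm] at hv
    exact hk ((hC k).2 (((hC l).1 hl).trans (flipsCancel_of_diff_diff_ne_zero he ⟨v, hv⟩)))
  refine ⟨C, Finset.one_lt_card.2 ⟨i, (hC i).2 (.refl i), j,
    (hC j).2 (flipsCancel_of_diff_diff_ne_zero he ⟨v, hv⟩), hij⟩, fun u w z₀ h₀ z => ?_⟩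
  have hquad : quad φ (C.piecewise u z) = quad φ (C.piecewise w z) :=
    piecewise_rel_of_forall_update C (R := fun x y => quad φ x = quad φ y)
      (fun x y hxy k hk a h => quad_update_eq (hdiff k hk) hk hxy h a) h₀ z
  exact ⟨hquad, apply_eq_of_quad_eq he (fun k => (hC k).1)
    (fun k hk => by simp [hk]) hquad⟩

end ParityBlock

namespace IsCompatible

variable {ι : Type*} [DecidableEq ι] {φ : (ι → ZMod 2) → ZMod 2} {s : (ι → Klein) → State}
  {i j : ι}

theorem shear_flip (hs : IsCompatible φ s) (hj : ∀ x, s (move φ j (0, 1) x) = s x) {c : ZMod 2}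
    {x : ι → Klein} (hx : Shear c (s x) (s (move φ j (1, 0) x))) (l : ι) :
    Shear c (s (move φ l (0, 1) x)) (s (move φ j (1, 0) (move φ l (0, 1) x))) := by
  have h01 : ((0, 1) : Klein) ≠ 0 := by decide
  have hagree := hs.agree_of_period h01 (hj (move φ l (0, 1) x)) (1, 0)
  rw [move_flip_comm] at hagree ⊢
  exact Shear.of_compat (hs x l _ h01) hx (hs _ l _ h01) hagree

theorem shear_of_tilted (hs : IsCompatible φ s) (hj : ∀ x, s (move φ j (0, 1) x) = s x)
    {x : ι → Klein} {e : ZMod 2} (hx : Tilted φ s i e x) :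
    Shear (diff (diff φ i) j (proj x)) (s x) (s (move φ j (1, 0) x)) := by
  have h01 : ((0, 1) : Klein) ≠ 0 := by decide
  set D := diff (diff φ i) j (proj x) with hD
  have hcorner : s (move φ i ((1, e) + (0, D)) x) =
      if D = 0 then s x else s (move φ i (0, 1) x) := by
    rw [add_comm, hs.move_add_period (by simp [Prod.ext_iff]) hx.2]
    split_ifs with h
    · rw [h, ← Prod.zero_eq_mk, move_zero]
    · have hD1 : D = 1 := Fin.eq_one_of_ne_zero D h
      rw [hD1]
  have hr := hs.agree_of_period h01 (hj (move φ i ((1, e) + (0, D)) x)) ((1, 0) + (0, D))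
  have hcomm := move_move_comm (φ := φ) i j (1, e) (1, 0) x
  rw [mul_one, one_mul, ← hD] at hcomm
  rw [← hcomm, hcorner] at hr
  have hcompat := (hs.isLine (move φ j (1, 0) x) i) (0, 1) (1, e) (by simp [Prod.ext_iff])
  have ht := hs.agree_of_period h01 (hj (move φ i (0, 1) x)) (1, 0)
  rw [move_flip_comm] at ht
  refine shear_of_square hx.1.symm (hs.agree_of_tilted hx)
    (hs.agree_of_period h01 (hj x) (1, 0)) ht (hs _ i _ h01) hr (hs _ i _ (by simp [Prod.ext_iff]))
    (by simpa [add_comm] using hcompat)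

theorem shear_move_one_zero [Finite ι] (hs : IsCompatible φ s)
    (hi : ∃ x, s (move φ i (0, 1) x) ≠ s x)
    (hj : ∀ x, s (move φ j (0, 1) x) = s x) (x : ι → Klein) :
    Shear (diff (diff φ i) j (proj x)) (s x) (s (move φ j (1, 0) x)) := by
  obtain ⟨z, hz, hzi⟩ := hs.exists_flip_ne hi (proj x)
  obtain ⟨e, he⟩ := hs.exists_tilted_period hzi
  exact of_forall_flip (P := fun y => Shear (diff (diff φ i) j (proj x)) (s y)
    (s (move φ j (1, 0) y))) (fun y l h => hs.shear_flip hj h l) hz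
    (hz ▸ hs.shear_of_tilted hj ⟨hzi, he⟩)

theorem shear_move [Finite ι] (hs : IsCompatible φ s) (hi : ∃ x, s (move φ i (0, 1) x) ≠ s x)
    (hj : ∀ x, s (move φ j (0, 1) x) = s x) (x : ι → Klein) (u : Klein) :
    Shear (u.1 * diff (diff φ j) i (proj x)) (s x) (s (move φ j u x)) := by
  have hsnd : s (move φ j u x) = s (move φ j (u.1, 0) x) := by
    obtain ⟨a, b⟩ := u
    obtain rfl | rfl : b = 0 ∨ b = 1 := by revert b; decide
    · rfl
    · simpa using hs.move_add_period (by decide) (hj x) (a, 0)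
  obtain h | h : u.1 = 0 ∨ u.1 = 1 := by generalize u.1 = a; revert a; decide
  · rw [hsnd, h, ← Prod.zero_eq_mk, move_zero]
    intro w
    simp [← Prod.zero_eq_mk]
  · rw [hsnd, h, one_mul, diff_diff_comm]
    exact hs.shear_move_one_zero hi hj x

theorem diff_diff_eq_of_flip_ne [Finite ι] (hs : IsCompatible φ s) {i' : ι}
    (hi : ∃ x, s (move φ i (0, 1) x) ≠ s x) (hi' : ∃ x, s (move φ i' (0, 1) x) ≠ s x)
    (hj : ∀ x, s (move φ j (0, 1) x) = s x) (v : ι → ZMod 2) :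
    diff (diff φ j) i v = diff (diff φ j) i' v := by
  rw [diff_diff_comm φ j i, diff_diff_comm φ j i']
  obtain ⟨x, rfl⟩ : ∃ x, proj x = v := ⟨fun k => (v k, 0), rfl⟩
  exact Shear.unique (hs.shear_move_one_zero hi hj x) (hs.shear_move_one_zero hi' hj x)

end IsCompatible

section ShearBlock

variable {ι : Type*} [Fintype ι] [DecidableEq ι] {φ : (ι → ZMod 2) → ZMod 2}
  {s : (ι → Klein) → State} {i j : ι} {I : Finset ι}

theorem diff_add_mul_sum_eq
    (hdiff : ∀ i' ∈ I, ∀ v, diff (diff φ j) i' v = diff (diff φ j) i v) {v w : ι → ZMod 2}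
    (hvw : ∀ k ∉ I, v k = w k) :
    diff (diff φ j) i w = diff (diff φ j) i v ∧
      diff φ j w + diff (diff φ j) i w * ∑ k, w k =
        diff φ j v + diff (diff φ j) i v * ∑ k, v k := by
  refine of_forall_add_single I (P := fun w => diff (diff φ j) i w = diff (diff φ j) i v ∧
    diff φ j w + diff (diff φ j) i w * ∑ k, w k =
      diff φ j v + diff (diff φ j) i v * ∑ k, v k) (fun w k hk ⟨h, h'⟩ => ?_) hvw ⟨rfl, rfl⟩
  have hD : diff (diff φ j) i (w + Pi.single k 1) = diff (diff φ j) i w := by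
    rw [← hdiff k hk, ← hdiff k hk, apply_add_single (diff (diff φ j) k), diff_diff_self, mul_zero,
      add_zero]
  refine ⟨hD.trans h, ?_⟩
  rw [hD, apply_add_single (diff φ j), hdiff k hk, ← h']
  simp only [Pi.add_apply, Finset.sum_add_distrib, Finset.sum_pi_single', Finset.mem_univ, if_true]
  grind

theorem IsCompatible.quad_add_update_eq (hs : IsCompatible φ s)
    (hI : ∀ i, i ∈ I ↔ ∃ x, s (move φ i (0, 1) x) ≠ s x) (hi : i ∈ I) (hj : j ∉ I)
    {x y : ι → Klein} (hxy : ∀ k ∉ I, x k = y k) {ω ω' : Klein}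
    (h : quad φ x + s x ω = quad φ y + s y ω') (a : Klein) :
    quad φ (update x j a) + s (update x j a) ω = quad φ (update y j a) + s (update y j a) ω' := by
  have hj' : ∀ x, s (move φ j (0, 1) x) = s x := by simpa [hI] using hj
  obtain ⟨hD, hK⟩ := diff_add_mul_sum_eq (φ := φ) (j := j) (v := proj x) (w := proj y)
    (fun i' hi' => hs.diff_diff_eq_of_flip_ne ((hI i').1 hi') ((hI i).1 hi) hj')
    (fun k hk => congrArg Prod.fst (hxy k hk))
  have hshear := hs.shear_move ((hI i).1 hi) hj'
  have hfst := congrArg Prod.fst h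
  have hsnd := congrArg Prod.snd h
  rw [update_eq_move (φ := φ), quad_move, update_eq_move (φ := φ), quad_move, hshear, hshear,
    hxy j hj]
  simp only [quad, proj, Prod.fst_add, Prod.snd_add] at hfst hsnd hK ⊢
  ext <;> simp only [Prod.fst_add, Prod.snd_add] <;> grind

end ShearBlock

section CommonPeriod

theorem isBalanced_pairing : ∀ {d : Klein}, d ≠ 0 → IsBalanced (pairing d) := by
  unfold IsBalanced; decide

theorem State.isBalanced_add_pairing : ∀ (c : ZMod 2) {d : Klein}, d ≠ 0 → ∀ s : State,
    IsBalanced fun w => c + pairing d (s w) := by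
  unfold IsBalanced; decide +kernel

theorem State.Agree.pairing_eq : ∀ {d : Klein}, d ≠ 0 → ∀ {s t : State}, Agree d s t →
    ∀ w, pairing d (s w) = pairing d (t w) := by
  decide +kernel

theorem IsCompatible.agree_of_common_period {ι : Type*} [DecidableEq ι] [Finite ι]
    {φ : (ι → ZMod 2) → ZMod 2} {s : (ι → Klein) → State} (hs : IsCompatible φ s) {d : Klein}
    (hd : d ≠ 0) (h : ∀ x i, s (move φ i d x) = s x) (x y : ι → Klein) : Agree d (s x) (s y) :=
  of_forall_move (φ := φ) (P := fun y => Agree d (s x) (s y))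
    (fun y i u hy => hy.trans (hs.agree_of_period hd (h y i) u)) (Agree.refl d _) y

variable {n : ℕ} {P : (Fin (n + 1) → Klein) → Klein} {φ : (Fin n → ZMod 2) → ZMod 2}
  {s : (Fin n → Klein) → State}

theorem hasParityCheck_of_common_period (hs : IsCompatible φ s)
    (hP : ∀ x ω, P (Fin.snoc x ω) = quad φ x + s x ω) {d : Klein} (hd : d ≠ 0)
    (hperiod : ∀ x i, s (move φ i d x) = s x) {c : ZMod 2} {D : Fin n → Klein} (hD : ∀ i, D i ≠ 0)
    (hquad : ∀ x, pairing d (quad φ x) = c + ∑ i, pairing (D i) (x i)) : HasParityCheck P := by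
  refine ⟨pairing d, Fin.snoc (α := fun _ => Klein → ZMod 2) (fun i => pairing (D i))
    fun ω => c + pairing d (s 0 ω), isBalanced_pairing hd, fun i => ?_, fun x => ?_⟩
  · cases i using Fin.lastCases with
    | last => simpa only [Fin.snoc_last] using isBalanced_add_pairing c hd (s 0)
    | cast i => simpa only [Fin.snoc_castSucc] using isBalanced_pairing (hD i)
  · rw [← Fin.snoc_init_self x, hP, pairing_add, hquad,
      (hs.agree_of_common_period hd hperiod _ 0).pairing_eq hd, Fin.sum_univ_castSucc]
    simp only [Fin.snoc_castSucc, Fin.snoc_last]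
    ring

theorem hasParityCheck_of_flip_eq (hs : IsCompatible φ s)
    (hP : ∀ x ω, P (Fin.snoc x ω) = quad φ x + s x ω)
    (hflip : ∀ x i, s (move φ i (0, 1) x) = s x) : HasParityCheck P :=
  hasParityCheck_of_common_period hs hP (c := 0) (D := fun _ => (0, 1)) (by decide) hflip
    (fun _ => by decide) fun x => by simp [pairing, quad]

theorem hasParityCheck_of_diff_diff_eq_zero (hs : IsCompatible φ s)
    (hP : ∀ x ω, P (Fin.snoc x ω) = quad φ x + s x ω) {e : ZMod 2}
    (he : ∀ x i, s (move φ i (1, e) x) = s x) (hφ : ∀ i j v, diff (diff φ i) j v = 0) :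
    HasParityCheck P := by
  refine hasParityCheck_of_common_period hs hP (c := φ 0) (D := fun i => (1, e + diff φ i 0))
    (by simp [Prod.ext_iff]) he (by simp [Prod.ext_iff]) fun x => ?_
  simp only [pairing, quad, eq_add_sum_of_diff_diff_eq_zero φ hφ (proj x), proj, one_mul,
    add_mul, Finset.sum_add_distrib, Finset.mul_sum, mul_comm (diff φ _ 0)]
  ring

end CommonPeriod

section NormalForm

theorem IsLatin.exists_eq_quad {ι : Type*} [Fintype ι] [DecidableEq ι] {L : (ι → Klein) → Klein}
    (hL : IsLatin L) (hfst : ∀ x, (L x).1 = ∑ i, (x i).1) : ∃ φ, ∀ x, L x = quad φ x := by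
  let φ : (ι → ZMod 2) → ZMod 2 := fun v => (L fun i => (v i, 0)).2
  have hflip : ∀ x i, L (move φ i (0, 1) x) = L x + (0, 1) := by
    intro x i
    have hproj : (L (move φ i (0, 1) x)).1 = (L x).1 := by
      rw [hfst, hfst]
      simp [move, sum_comp_update Prod.fst]
    have hne : L (move φ i (0, 1) x) ≠ L x := hL.apply_move_ne (by decide)
    have eq_add_flip : ∀ a b : Klein, a.1 = b.1 → a ≠ b → a = b + (0, 1) := by decide
    exact eq_add_flip _ _ hproj hne
  refine ⟨φ, fun x => of_forall_flip (φ := φ) (P := fun x => L x = quad φ x) (fun x i h => ?_)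
    (x := fun i => ((x i).1, 0)) rfl ?_⟩
  · rw [hflip, h, quad_move]
  · ext
    · simp [hfst, quad]
    · simp [quad, φ, proj]

theorem IsLatin.exists_eq_quad_add {n : ℕ} {P : (Fin (n + 1) → Klein) → Klein} (hP : IsLatin P)
    (hfst : ∀ x : Fin n → Klein, (P (Fin.snoc x 0)).1 = ∑ i, (x i).1) :
    ∃ φ s, IsCompatible φ s ∧ ∀ x ω, P (Fin.snoc x ω) = quad φ x + s x ω := by
  have hinit : ∀ ω : Klein, IsLatin fun x : Fin n → Klein => P (Fin.snoc x ω) := fun ω x i => by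
    simp only [Fin.snoc_update]
    exact hP _ _
  have hlast : ∀ x : Fin n → Klein, Injective fun ω : Klein => P (Fin.snoc x ω) := fun x => by
    simpa only [Fin.update_snoc_last] using hP (Fin.snoc x 0) (Fin.last n)
  obtain ⟨φ, hφ⟩ := (hinit 0).exists_eq_quad hfst
  choose s hs using fun x => State.exists_eq_of_injective
    (f := fun ω => P (Fin.snoc x ω) - P (Fin.snoc x 0))
    (fun ω ω' h => hlast x (sub_left_injective h)) (sub_self _)
  have hnormal : ∀ x ω, P (Fin.snoc x ω) = quad φ x + s x ω := fun x ω => by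
    rw [← hφ, ← hs, add_sub_cancel]
  refine ⟨φ, s, fun x i u hu ω h => ?_, hnormal⟩
  refine (hinit ω).apply_move_ne (φ := φ) (x := x) (i := i) hu ?_
  rw [hnormal, hnormal, quad_move, ← h, add_add_add_comm, CharTwo.add_self_eq_zero, add_zero]

end NormalForm

section Blocks

variable {n : ℕ} {A B : Type*} {P : (Fin (n + 1) → A) → B} {C : Finset (Fin n)}

theorem piecewise_map_castSucc (u z : Fin n → A) (a b : A) :
    (C.map Fin.castSuccEmb).piecewise (Fin.snoc u a : Fin (n + 1) → A) (Fin.snoc z b) =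
      Fin.snoc (C.piecewise u z) b := by
  ext i
  cases i using Fin.lastCases with
  | last => simp
  | cast i => by_cases hi : i ∈ C <;> simp [hi, Finset.piecewise]

theorem piecewise_insert_last_map_castSucc (u z : Fin n → A) (a b : A) :
    (insert (Fin.last n) (C.map Fin.castSuccEmb)).piecewise (Fin.snoc u a : Fin (n + 1) → A)
      (Fin.snoc z b) = Fin.snoc (C.piecewise u z) a := by
  rw [Finset.piecewise_insert, piecewise_map_castSucc, Fin.snoc_last, Fin.update_snoc_last]

theorem isBlock_map_castSucc (z₀ : Fin n → A) (a₀ : A)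
    (h : ∀ u w, P (Fin.snoc (C.piecewise u z₀) a₀) = P (Fin.snoc (C.piecewise w z₀) a₀) →
      ∀ z a, P (Fin.snoc (C.piecewise u z) a) = P (Fin.snoc (C.piecewise w z) a)) :
    IsBlock (C.map Fin.castSuccEmb) P := by
  refine ⟨Fin.snoc z₀ a₀, fun u w huw z => ?_⟩
  cases u using Fin.snocCases with | snoc u a
  cases w using Fin.snocCases with | snoc w b
  cases z using Fin.snocCases with | snoc z c
  simp only [piecewise_map_castSucc] at huw ⊢
  exact h _ _ huw _ _

theorem isBlock_insert_last_map_castSucc (z₀ : Fin n → A) (a₀ : A)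
    (h : ∀ u w a b, P (Fin.snoc (C.piecewise u z₀) a) = P (Fin.snoc (C.piecewise w z₀) b) →
      ∀ z, P (Fin.snoc (C.piecewise u z) a) = P (Fin.snoc (C.piecewise w z) b)) :
    IsBlock (insert (Fin.last n) (C.map Fin.castSuccEmb)) P := by
  refine ⟨Fin.snoc z₀ a₀, fun u w huw z => ?_⟩
  cases u using Fin.snocCases with | snoc u a
  cases w using Fin.snocCases with | snoc w b
  cases z using Fin.snocCases with | snoc z c
  simp only [piecewise_insert_last_map_castSucc] at huw ⊢
  exact h _ _ _ _ huw _

end Blocks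

section Core

variable {n : ℕ} {P : (Fin (n + 1) → Klein) → Klein} {φ : (Fin n → ZMod 2) → ZMod 2}
  {s : (Fin n → Klein) → State}

theorem exists_isBlock_of_diff_diff_ne_zero (hP : ∀ x ω, P (Fin.snoc x ω) = quad φ x + s x ω)
    {e : ZMod 2} (he : ∀ x i, s (move φ i (1, e) x) = s x)
    (hφ : ∃ i j v, diff (diff φ i) j v ≠ 0) :
    ∃ C : Finset (Fin (n + 1)), 2 ≤ C.card ∧ C.card < n + 1 ∧ IsBlock C P := by
  obtain ⟨C, hC, h⟩ := exists_block_of_diff_diff_ne_zero he hφ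
  refine ⟨C.map Fin.castSuccEmb, by rwa [Finset.card_map], ?_,
    isBlock_map_castSucc 0 0 fun u w huw z ω => ?_⟩
  · rw [Finset.card_map]
    exact Nat.lt_succ_of_le (card_finset_fin_le C)
  · simp only [hP, State.apply_zero, add_zero] at huw
    obtain ⟨hquad, hs⟩ := h u w 0 huw z
    rw [hP, hP, hquad, hs]

theorem IsCompatible.isBlock_insert_last (hs : IsCompatible φ s)
    (hP : ∀ x ω, P (Fin.snoc x ω) = quad φ x + s x ω) {I : Finset (Fin n)}
    (hI : ∀ i, i ∈ I ↔ ∃ x, s (move φ i (0, 1) x) ≠ s x) (hne : I.Nonempty) :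
    IsBlock (insert (Fin.last n) (I.map Fin.castSuccEmb)) P := by
  obtain ⟨i, hi⟩ := hne
  refine isBlock_insert_last_map_castSucc 0 0 fun u w ω ω' h₀ z => ?_
  simp only [hP] at h₀ ⊢
  exact piecewise_rel_of_forall_update I
    (R := fun x y => quad φ x + s x ω = quad φ y + s y ω')
    (fun x y hxy j hj a h => hs.quad_add_update_eq hI hi hj hxy h a) h₀ z

theorem IsLatin.hasParityCheck_or_exists_isBlock (hP : IsLatin P)
    (hfst : ∀ x : Fin n → Klein, (P (Fin.snoc x 0)).1 = ∑ i, (x i).1) :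
    HasParityCheck P ∨ ∃ C : Finset (Fin (n + 1)), 2 ≤ C.card ∧ C.card < n + 1 ∧ IsBlock C P := by
  classical
  obtain ⟨φ, s, hs, hP⟩ := hP.exists_eq_quad_add hfst
  let I : Finset (Fin n) := {i | ∃ x, s (move φ i (0, 1) x) ≠ s x}
  have hI : ∀ i, i ∈ I ↔ ∃ x, s (move φ i (0, 1) x) ≠ s x := by simp [I]
  obtain hempty | hne := I.eq_empty_or_nonempty
  · left
    have hflip : ∀ i x, s (move φ i (0, 1) x) = s x := fun i => by simpa [hempty] using hI i
    exact hasParityCheck_of_flip_eq hs hP fun x i => hflip i x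
  obtain hIuniv | hIuniv := eq_or_ne I Finset.univ
  · have hv : NoVertical φ s := hs.noVertical fun i => (hI i).1 (hIuniv ▸ Finset.mem_univ i)
    obtain ⟨e, he⟩ := hs.exists_common_period hv
    by_cases hφ : ∀ i j v, diff (diff φ i) j v = 0
    · exact Or.inl (hasParityCheck_of_diff_diff_eq_zero hs hP he hφ)
    · push Not at hφ
      exact Or.inr (exists_isBlock_of_diff_diff_ne_zero hP he hφ)
  · have hcard : (insert (Fin.last n) (I.map Fin.castSuccEmb)).card = I.card + 1 := by
      rw [Finset.card_insert_of_notMem (by simp), Finset.card_map]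
    have hlt : I.card < n := by simpa using (Finset.card_lt_iff_ne_univ I).2 hIuniv
    exact Or.inr ⟨_, by have := hne.card_pos; omega, by omega, hs.isBlock_insert_last hP hI hne⟩

end Core

section Coordinates

theorem exists_equiv_klein : ∀ T : Finset V4, T.card = 2 →
    ∃ E : V4 ≃ Klein, ∀ a, (E a).1 = if a ∈ T then 1 else 0 := by
  decide +kernel

theorem exists_isotope_fst_eq_sum {n : ℕ} {q : (Fin (n + 1) → V4) → V4} {α : V4}
    (hq : IsSemilinear fun x : Fin n → V4 => q (Fin.snoc x α)) :
    ∃ (E : Fin (n + 1) → V4 ≃ Klein) (F : V4 ≃ Klein),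
      ∀ x : Fin n → Klein, (isotope E F q (Fin.snoc x 0)).1 = ∑ i, (x i).1 := by
  obtain ⟨a, b, hab, T, hT, hq⟩ := hq
  choose E hE using fun i => exists_equiv_klein (T i) (hT i)
  obtain ⟨F, hF⟩ := exists_equiv_klein {a, b} (Finset.card_pair hab)
  let W : V4 ≃ Klein := F.trans (Equiv.subRight (F α))
  let E' : Fin (n + 1) → V4 ≃ Klein := Fin.snoc (α := fun _ => V4 ≃ Klein) E W
  refine ⟨E', F, fun x => ?_⟩
  have hsnoc : (fun i => (E' i).symm ((Fin.snoc x 0 : Fin (n + 1) → Klein) i)) =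
      Fin.snoc (fun i => (E i).symm (x i)) α := by
    ext i : 1
    cases i using Fin.lastCases with
    | last => simp [E', W]
    | cast i => simp [E']
  have hmem : q (Fin.snoc (fun i => (E i).symm (x i)) α) ∈ ({a, b} : Finset V4) ↔
      ∑ i, (x i).1 = 1 := by
    simpa [SCode, ← hE] using hq fun i => (E i).symm (x i)
  rw [isotope, hsnoc, hF]
  simp only [hmem, ite_eq_one_eq_self]

end Coordinates

/-- Lemma 4 (on a semilinear layer): if an `(n+1)`-quasigroup `q` (with
`n + 1 ≥ 3`) has a layer `q_α` that is a semilinear `n`-quasigroup, then `q`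
is semilinear or decomposable. -/
theorem semilinear_layer (n : ℕ) (hn : 3 ≤ n + 1)
    (q : (Fin (n + 1) → V4) → V4) (hq : IsNQuasigroup q) (α : V4)
    (hlayerQ : IsNQuasigroup (fun x : Fin n → V4 => q (Fin.snoc x α)))
    (hlayerSL : IsSemilinear (fun x : Fin n → V4 => q (Fin.snoc x α))) :
    IsSemilinear q ∨ IsDecomposable q := by
  have hlatin : IsLatin q := isNQuasigroup_iff_isLatin.1 hq
  obtain ⟨E, F, hfst⟩ := exists_isotope_fst_eq_sum hlayerSL
  obtain hcheck | ⟨C, hC, hCn, hblock⟩ := hlatin.isotope.hasParityCheck_or_exists_isBlock hfst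
  · exact Or.inl hcheck.of_isotope.isSemilinear
  · exact Or.inr (hblock.of_isotope.isDecomposable hlatin hC hCn)
end
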